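/- arXiv:math/0012155 — 6 statements merged into one kernel-verified Lean document; each statement's English description precedes it below -/
import Mathlib

section
/- For every g ∈ SL_n(K) there exist an element (σ,a,b) of the double affine Weyl group Ŵ and a lifting m of (σ,a,b) such that g ∈ D_0·m·D_0, and the element (σ,a,b) is uniquely determined by g: if m and m' are liftings of (σ,a,b) and (σ',a',b') and the double cosets D_0·m·D_0 and D_0·m'·D_0 intersect, then (σ,a,b) = (σ',a',b'). Thus D_0\SL_n(K)/D_0 is canonically identified with Ŵ. -/
/-!
Double coset decomposition of `SL_n(K)` over the two-dimensional local field
`K = F_q((t1))((t2))` with respect to the double Iwahori subgroup `D_0`: `SL_n(K)` is the disjoint union over the double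
affine Weyl group `Ŵ` (triples `(σ, a, b)`, `Σ a_k = Σ b_k = 0`) of the double
cosets `D_0 · m · D_0`, where `m` is any lifting of `(σ, a, b)`; the resulting
identification of `D_0 \ SL_n(K) / D_0` with `Ŵ` does not depend on the choice
of liftings.
-/

noncomputable section

/-- The first residue field `K1 = F_q((t1))`. -/
abbrev Kone (F : Type) [Field F] := LaurentSeries F

/-- The two-dimensional local field `K = K1((t2)) = F_q((t1))((t2))`. -/
abbrev Ktwo (F : Type) [Field F] := LaurentSeries (Kone F)

/-- The local parameter `t1` as an element of `K`. -/
def tone (F : Type) [Field F] : Ktwo F := HahnSeries.single 0 (HahnSeries.single 1 1)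

/-- The local parameter `t2` as an element of `K`. -/
def ttwo (F : Type) [Field F] : Ktwo F := HahnSeries.single 1 1

/-- `f ∈ O_{K2} = K1[[t2]]`. -/
def IsInt2 (F : Type) [Field F] (f : Ktwo F) : Prop := ∀ m : ℤ, m < 0 → f.coeff m = 0

/-- `x ∈ O_{K1} = F_q[[t1]]`. -/
def IsInt1 (F : Type) [Field F] (x : Kone F) : Prop := ∀ m : ℤ, m < 0 → x.coeff m = 0

/-- The double Iwahori subgroup
`D_0 = {g ∈ SL_n(O_{K2}) : p2(g) ∈ SL_n(O_{K1}), p1(p2(g)) ∈ B(F_q)}`. -/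
def Dzero (F : Type) [Field F] (n : ℕ) :
    Set (Matrix.SpecialLinearGroup (Fin n) (Ktwo F)) :=
  {g | ∀ i j : Fin n,
    IsInt2 F ((g : Matrix (Fin n) (Fin n) (Ktwo F)) i j) ∧
    IsInt1 F (((g : Matrix (Fin n) (Fin n) (Ktwo F)) i j).coeff 0) ∧
    (j < i → (((g : Matrix (Fin n) (Fin n) (Ktwo F)) i j).coeff 0).coeff 0 = 0)}

/-- `m` is a lifting of the element `(σ, a, b)` of the double affine Weyl group:
a monomial matrix with entries `m_{σ k, k} = ε_k · t1^{a_k} · t2^{b_k}`,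
`ε_k ∈ {1, -1}`. -/
def IsLifting (F : Type) [Field F] (n : ℕ) (σ : Equiv.Perm (Fin n))
    (a b : Fin n → ℤ) (m : Matrix.SpecialLinearGroup (Fin n) (Ktwo F)) : Prop :=
  ∃ ε : Fin n → Ktwo F, (∀ k, ε k = 1 ∨ ε k = -1) ∧
    ∀ i k : Fin n, (m : Matrix (Fin n) (Fin n) (Ktwo F)) i k =
      if i = σ k then ε k * (tone F) ^ (a k) * (ttwo F) ^ (b k) else 0


section Concrete
variable (F : Type) [Field F]
open HahnSeries

theorem int_iff_ps {R : Type} [Field R] (x : LaurentSeries R) :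
    (∀ m : ℤ, m < 0 → x.coeff m = 0) ↔ ∃ P : PowerSeries R, ofPowerSeries ℤ R P = x := by
  constructor
  · intro h
    refine ⟨PowerSeries.mk fun n => x.coeff n, ?_⟩
    ext m
    rcases lt_or_ge m 0 with hm | hm
    · rw [h m hm]
      rw [ofPowerSeries_apply, embDomain_of_notMem_range]
      simp only [Set.mem_range, not_exists]
      intro y hy
      simp at hy
      lia
    · obtain ⟨k, rfl⟩ := Int.eq_ofNat_of_zero_le hm
      rw [LaurentSeries.coeff_coe_powerSeries]
      simp
  · rintro ⟨P, rfl⟩ m hm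
    rw [ofPowerSeries_apply, embDomain_of_notMem_range]
    simp only [Set.mem_range, not_exists]
    intro y hy
    simp at hy
    lia

theorem coeff_zero_ps {R : Type} [Field R] (P : PowerSeries R) :
    (ofPowerSeries ℤ R P).coeff 0 = PowerSeries.constantCoeff P := by
  have := LaurentSeries.coeff_coe_powerSeries P 0
  simpa using this

/-- the rank two valuation ring, as a subring -/
def OSub : Subring (Ktwo F) :=
  (((ofPowerSeries ℤ F).range).comap (PowerSeries.constantCoeff (R := Kone F))).map
    (ofPowerSeries ℤ (Kone F))

theorem mem_OSub' (x : Ktwo F) : x ∈ OSub F ↔ ∃ (P : PowerSeries (Kone F)) (Q : PowerSeries F),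
    ofPowerSeries ℤ F Q = PowerSeries.constantCoeff P ∧ ofPowerSeries ℤ (Kone F) P = x := by
  simp [OSub]

theorem mem_OSub (x : Ktwo F) : x ∈ OSub F ↔ IsInt2 F x ∧ IsInt1 F (x.coeff 0) := by
  rw [mem_OSub', IsInt2, IsInt1, int_iff_ps, int_iff_ps]
  constructor
  · rintro ⟨P, Q, h, rfl⟩
    exact ⟨⟨P, rfl⟩, Q, by rw [coeff_zero_ps, h]⟩
  · rintro ⟨⟨P, rfl⟩, Q, h⟩
    exact ⟨P, Q, by rw [h, coeff_zero_ps], rfl⟩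

theorem inv_mem_OSub {x : Ktwo F} (hx : x ∈ OSub F) :
    x⁻¹ ∈ OSub F ∧ x ≠ 0 ↔ (x.coeff 0).coeff 0 ≠ 0 := by
  rw [mem_OSub'] at hx
  obtain ⟨P, Q, h, rfl⟩ := hx
  rw [coeff_zero_ps, ← h, coeff_zero_ps]
  constructor
  · rintro ⟨h1, h0⟩ hQ
    rw [mem_OSub'] at h1
    obtain ⟨P', Q', h', h2⟩ := h1
    have h3 : P' * P = 1 := by
      apply ofPowerSeries_injective (Γ := ℤ)
      rw [map_mul, h2, map_one, inv_mul_cancel₀ h0]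
    have h4 : Q' * Q = 1 := by
      apply ofPowerSeries_injective (Γ := ℤ)
      rw [map_mul, h, h', ← map_mul, h3]; simp
    have h5 := congrArg PowerSeries.constantCoeff h4
    rw [map_mul, hQ] at h5
    simp at h5
  · intro hQ
    have hQ' := PowerSeries.mul_inv_cancel Q hQ
    have hP : PowerSeries.constantCoeff P ≠ 0 := by
      rw [← h]
      intro h0
      rw [← map_zero (ofPowerSeries ℤ F)] at h0
      rw [ofPowerSeries_injective h0] at hQ
      simp at hQ
    have hP' := PowerSeries.mul_inv_cancel P hP
    have e := congrArg (ofPowerSeries ℤ (Kone F)) hP'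
    rw [map_mul, map_one] at e
    refine ⟨?_, left_ne_zero_of_mul_eq_one e⟩
    rw [mem_OSub']
    refine ⟨P⁻¹, Q⁻¹, ?_, eq_inv_of_mul_eq_one_right e⟩
    have e1 := congrArg (ofPowerSeries ℤ F) hQ'
    have e2 := congrArg PowerSeries.constantCoeff hP'
    rw [map_mul, map_one] at e1 e2
    rw [← h] at e2
    exact mul_left_cancel₀ (left_ne_zero_of_mul_eq_one e1) (e1.trans e2.symm)

theorem mono_eq (a b : ℤ) : tone F ^ a * ttwo F ^ b = single b (single a 1) := by
  have h1 : ttwo F ^ b = single b 1 := by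
    rw [ttwo, ← RatFunc.single_zpow b]
  have h2 : tone F ^ a = C (single a (1:F)) := by
    have : (single a (1:F)) = (single (1:ℤ) (1:F)) ^ a := by rw [RatFunc.single_zpow]
    rw [this, tone, map_zpow₀]; rfl
  rw [h1, h2, C_apply, single_mul_single]
  simp

theorem mono_ne (a b : ℤ) : tone F ^ a * ttwo F ^ b ≠ 0 := by
  rw [mono_eq]; simp

theorem mono_mul (a b a' b' : ℤ) : (tone F ^ a * ttwo F ^ b) * (tone F ^ a' * ttwo F ^ b') =
    tone F ^ (a+a') * ttwo F ^ (b+b') := by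
  simp [mono_eq, single_mul_single]

theorem mono_inv (a b : ℤ) : (tone F ^ a * ttwo F ^ b)⁻¹ =
    tone F ^ (-a) * ttwo F ^ (-b) := by
  rw [mul_inv, zpow_neg, zpow_neg]

theorem mono_mem (a b : ℤ) : tone F ^ a * ttwo F ^ b ∈ OSub F ↔ 0 < b ∨ (b = 0 ∧ 0 ≤ a) := by
  rw [mono_eq, mem_OSub, IsInt2, IsInt1]
  constructor
  · rintro ⟨h1, h2⟩
    rcases lt_trichotomy b 0 with h | h | h
    · have := h1 b h
      simp at this
    · right
      refine ⟨h, ?_⟩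
      subst h
      by_contra! ha
      have := h2 a ha
      simp at this
    · exact Or.inl h
  · rintro (h | ⟨rfl, h⟩)
    · refine ⟨fun m hm => ?_, fun m hm => ?_⟩
      · rw [coeff_single_of_ne (by lia)]
      · rw [coeff_single_of_ne (by lia)]; rfl
    · refine ⟨fun m hm => ?_, fun m hm => ?_⟩
      · rw [coeff_single_of_ne (by lia)]
      · rw [coeff_single_same, coeff_single_of_ne (by lia)]

theorem exists_fact (x : Ktwo F) (hx : x ≠ 0) : ∃ (a b : ℤ) (u : Ktwo F),
    u ∈ OSub F ∧ u⁻¹ ∈ OSub F ∧ u ≠ 0 ∧ x = u * (tone F ^ a * ttwo F ^ b) := by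
  obtain ⟨P, hP⟩ : ∃ P, P = LaurentSeries.powerSeriesPart x := ⟨_, rfl⟩
  obtain ⟨c, hc⟩ : ∃ c, c = PowerSeries.constantCoeff P := ⟨_, rfl⟩
  have hc0 : c ≠ 0 := by
    rw [hc, hP, ← PowerSeries.coeff_zero_eq_constantCoeff_apply,
      LaurentSeries.powerSeriesPart_coeff]
    simpa using hx
  obtain ⟨Q, hQ⟩ : ∃ Q, Q = LaurentSeries.powerSeriesPart c := ⟨_, rfl⟩
  have hq0 : PowerSeries.constantCoeff Q ≠ 0 := by
    rw [hQ, ← PowerSeries.coeff_zero_eq_constantCoeff_apply,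
      LaurentSeries.powerSeriesPart_coeff]
    simpa using hc0
  have hu : ofPowerSeries ℤ (Kone F) (P * PowerSeries.C (single (-c.order) 1)) ∈ OSub F := by
    rw [mem_OSub']
    refine ⟨_, Q, ?_, rfl⟩
    rw [hQ, LaurentSeries.ofPowerSeries_powerSeriesPart, map_mul, ← hc]
    simp [mul_comm]
  have h2 := (inv_mem_OSub F hu).2 (by
    rw [coeff_zero_ps, map_mul, ← hc]
    have : c * PowerSeries.constantCoeff (PowerSeries.C (single (-c.order) (1:F))) =
      ofPowerSeries ℤ F Q := by
      rw [hQ, LaurentSeries.ofPowerSeries_powerSeriesPart]; simp [mul_comm]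
    rw [this, coeff_zero_ps]
    exact hq0)
  refine ⟨c.order, x.order, _, hu, h2.1, h2.2, ?_⟩
  rw [map_mul, hP, LaurentSeries.ofPowerSeries_powerSeriesPart, mono_eq, ofPowerSeries_C, C_apply]
  rw [mul_assoc, single_mul_single, single_mul_single, mul_right_comm, single_mul_single]
  simp [← C_apply]

/-- the rank two valuation ring -/
def OVal : ValuationSubring (Ktwo F) where
  toSubring := OSub F
  mem_or_inv_mem' := by
    intro x
    change x ∈ OSub F ∨ x⁻¹ ∈ OSub F
    by_cases hx : x = 0
    · left; rw [hx]; exact zero_mem _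
    obtain ⟨a, b, u, h1, h2, h3, rfl⟩ := exists_fact F x hx
    by_cases h : 0 < b ∨ (b = 0 ∧ 0 ≤ a)
    · exact Or.inl (mul_mem h1 ((mono_mem F a b).2 h))
    · right
      rw [mul_inv, mono_inv]
      exact mul_mem h2 ((mono_mem F _ _).2 (by lia))

theorem mem_OVal (x : Ktwo F) : x ∈ OVal F ↔ x ∈ OSub F := Iff.rfl

theorem OVal_le (x : Ktwo F) : (OVal F).valuation x ≤ 1 ↔ IsInt2 F x ∧ IsInt1 F (x.coeff 0) := by
  rw [ValuationSubring.valuation_le_one_iff, mem_OVal, mem_OSub]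

theorem OVal_inv (x : Ktwo F) (hx : x ≠ 0) : 1 ≤ (OVal F).valuation x ↔ x⁻¹ ∈ OSub F := by
  rw [← mem_OVal, ← ValuationSubring.valuation_le_one_iff, map_inv₀]
  rw [inv_le_one₀]
  simpa [zero_lt_iff] using hx

theorem OVal_lt (x : Ktwo F) : (OVal F).valuation x < 1 ↔
    (IsInt2 F x ∧ IsInt1 F (x.coeff 0)) ∧ (x.coeff 0).coeff 0 = 0 := by
  by_cases hx : x = 0
  · subst hx
    simp [IsInt2, IsInt1]
  constructor
  · intro h
    have h1 := (OVal_le F x).1 h.le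
    refine ⟨h1, ?_⟩
    by_contra h2
    have := ((inv_mem_OSub F ((mem_OSub F x).2 h1)).2 h2).1
    rw [← OVal_inv F x hx] at this
    exact absurd h (not_lt.2 this)
  · rintro ⟨h1, h2⟩
    by_contra h
    rw [not_lt, OVal_inv F x hx] at h
    exact (inv_mem_OSub F ((mem_OSub F x).2 h1)).1 ⟨h, hx⟩ h2

theorem OVal_mono (a b : ℤ) (h : (OVal F).valuation (tone F ^ a * ttwo F ^ b) = 1) :
    a = 0 ∧ b = 0 := by
  have h1 := (ValuationSubring.valuation_le_one_iff _ _).1 h.le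
  have h2 := (OVal_inv F _ (mono_ne F a b)).1 h.ge
  rw [mem_OVal, mono_mem] at h1
  rw [mono_inv, mono_mem] at h2
  lia

theorem OVal_mono_inj (a b a' b' : ℤ) (h : (OVal F).valuation (tone F ^ a * ttwo F ^ b) =
    (OVal F).valuation (tone F ^ a' * ttwo F ^ b')) : a = a' ∧ b = b' := by
  have := OVal_mono F (a + -a') (b + -b') (by
    rw [← mono_mul, ← mono_inv, map_mul, map_inv₀, h, mul_inv_cancel₀]
    exact (Valuation.ne_zero_iff _).2 (mono_ne F a' b'))
  lia

theorem OVal_fact (x : Ktwo F) (hx : x ≠ 0) : ∃ ab : ℤ × ℤ,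
    (OVal F).valuation x = (OVal F).valuation (tone F ^ ab.1 * ttwo F ^ ab.2) := by
  obtain ⟨a, b, u, h1, h2, h3, rfl⟩ := exists_fact F x hx
  refine ⟨(a, b), ?_⟩
  have : (OVal F).valuation u = 1 :=
    le_antisymm ((ValuationSubring.valuation_le_one_iff _ _).2 h1) ((OVal_inv F u h3).2 h2)
  rw [map_mul, this, one_mul]

end Concrete

section Abstract
variable {K : Type} [Field K] (A : ValuationSubring K) {n : ℕ}
open Matrix

/-- Iwahori condition -/
def IsIw (M : Matrix (Fin n) (Fin n) K) : Prop :=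
  ∀ i j, A.valuation (M i j) ≤ 1 ∧ (j < i → A.valuation (M i j) < 1)

theorem IsIw.mul {M N : Matrix (Fin n) (Fin n) K} (hM : IsIw A M) (hN : IsIw A N) :
    IsIw A (M * N) := by
  intro i j
  rw [Matrix.mul_apply]
  refine ⟨Valuation.map_sum_le _ fun k _ => ?_, fun hij => Valuation.map_sum_lt _ one_ne_zero fun k _ => ?_⟩
  · rw [map_mul]; exact mul_le_one' (hM i k).1 (hN k j).1
  · rw [map_mul]
    rcases lt_or_ge k i with h | h
    · exact (mul_le_of_le_one_right' (hN k j).1).trans_lt ((hM i k).2 h)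
    · exact (mul_le_of_le_one_left' (hM i k).1).trans_lt ((hN k j).2 (hij.trans_le h))

theorem IsIw.exists_lift {M : SpecialLinearGroup (Fin n) K} (hM : IsIw A M.1) :
    ∃ N : SpecialLinearGroup (Fin n) A, M = SpecialLinearGroup.map A.subtype N ∧
      (SpecialLinearGroup.map (IsLocalRing.residue A) N).1.BlockTriangular id := by
  let N0 : Matrix (Fin n) (Fin n) A := fun i j => ⟨M.1 i j, (A.valuation_le_one_iff _).1 (hM i j).1⟩
  have e : N0.map A.subtype = M.1 := by ext i j; rfl
  have hd : N0.det = 1 := by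
    apply A.subtype_injective
    rw [RingHom.map_det, map_one, ← M.2, ← e]; rfl
  refine ⟨⟨N0, hd⟩, Subtype.ext e.symm, ?_⟩
  intro i j hij
  change IsLocalRing.residue A (N0 i j) = 0
  rw [IsLocalRing.residue_eq_zero_iff, A.valuation_lt_one_iff]
  exact (hM i j).2 hij

theorem isIw_of_lift (N : SpecialLinearGroup (Fin n) A)
    (h : (SpecialLinearGroup.map (IsLocalRing.residue A) N).1.BlockTriangular id) :
    IsIw A (SpecialLinearGroup.map A.subtype N).1 := by
  intro i j
  refine ⟨A.valuation_le_one (N.1 i j), fun hij => ?_⟩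
  have := h hij
  change IsLocalRing.residue A (N.1 i j) = 0 at this
  rw [IsLocalRing.residue_eq_zero_iff, A.valuation_lt_one_iff] at this
  exact this

theorem IsIw.inv {M : SpecialLinearGroup (Fin n) K} (hM : IsIw A M.1) : IsIw A (M⁻¹).1 := by
  obtain ⟨N, rfl, h⟩ := hM.exists_lift
  rw [← map_inv]
  apply isIw_of_lift
  rw [map_inv]
  set R := SpecialLinearGroup.map (IsLocalRing.residue A) N
  let _ : Invertible R.1 := ⟨(R⁻¹).1, congrArg Subtype.val (inv_mul_cancel R),
    congrArg Subtype.val (mul_inv_cancel R)⟩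
  have := Matrix.blockTriangular_inv_of_blockTriangular h
  rwa [← Matrix.invOf_eq_nonsing_inv] at this

theorem IsIw.diag {M : SpecialLinearGroup (Fin n) K} (hM : IsIw A M.1) (i : Fin n) :
    A.valuation (M.1 i i) = 1 := by
  obtain ⟨N, rfl, h⟩ := hM.exists_lift
  have h1 := Matrix.det_of_isUpperTriangular h
  rw [(SpecialLinearGroup.map (IsLocalRing.residue A) N).2] at h1
  have h2 : (SpecialLinearGroup.map (IsLocalRing.residue A) N).1 i i ≠ 0 := fun h0 => by
    exact one_ne_zero (h1.trans (Finset.prod_eq_zero (Finset.mem_univ i) h0))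
  change IsLocalRing.residue A (N.1 i i) ≠ 0 at h2
  rw [Ne, IsLocalRing.residue_eq_zero_iff, A.valuation_lt_one_iff] at h2
  exact le_antisymm (A.valuation_le_one _) (not_lt.1 h2)

theorem perm_eq_of_le (σ σ' : Equiv.Perm (Fin n)) (h : ∀ k, σ' k ≤ σ k) : σ = σ' := by
  have hs : ∑ k, ((σ' k : Fin n) : ℕ) = ∑ k, ((σ k : Fin n) : ℕ) := by
    rw [Equiv.sum_comp σ' (fun k : Fin n => (k : ℕ)), Equiv.sum_comp σ (fun k : Fin n => (k : ℕ))]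
  have := (Finset.sum_eq_sum_iff_of_le (fun k _ => by exact_mod_cast h k)).1 hs
  ext k
  exact (this k (Finset.mem_univ k)).symm

theorem uniq_abs (σ σ' : Equiv.Perm (Fin n)) (w w' : Fin n → K) (hw : ∀ k, w k ≠ 0)
    (d d' : SpecialLinearGroup (Fin n) K) (hd : IsIw A d.1) (hd' : IsIw A d'.1)
    (h : d.1 * (Matrix.of fun i k => if i = σ k then w k else 0) =
      (Matrix.of fun i k => if i = σ' k then w' k else 0) * d'.1) :
    σ = σ' ∧ ∀ k, A.valuation (w k) = A.valuation (w' k) := by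
  have key : ∀ l k, d.1 (σ' l) (σ k) * w k = w' l * d'.1 l k := by
    intro l k
    have := congrFun (congrFun h (σ' l)) k
    simpa [Matrix.mul_apply] using this
  have h1 : ∀ k, A.valuation (w' k) = A.valuation (d.1 (σ' k) (σ k)) * A.valuation (w k) := by
    intro k
    rw [← map_mul, key, map_mul, hd'.diag, mul_one]
  have h1' : ∀ k, A.valuation (w' k) ≤ A.valuation (w k) := by
    intro k
    rw [h1]
    exact mul_le_of_le_one_left' (hd _ _).1
  have h2 : ∀ k, A.valuation (w k) ≤ A.valuation (w' ((σ.trans σ'.symm) k)) := by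
    intro k
    have := congrArg A.valuation (key (σ'.symm (σ k)) k)
    rw [map_mul, map_mul, Equiv.apply_symm_apply, hd.diag, one_mul] at this
    rw [this]
    exact mul_le_of_le_one_right' (hd' _ _).1
  obtain ⟨τ, hτ⟩ : ∃ τ : Equiv.Perm (Fin n), τ = σ.trans σ'.symm := ⟨_, rfl⟩
  rw [← hτ] at h2
  have h3 : ∀ (j : ℕ) k, A.valuation (w k) ≤ A.valuation (w ((τ ^ j) k)) := by
    intro j
    induction j with
    | zero => intro k; simp
    | succ j ih =>
      intro k
      rw [pow_succ, Equiv.Perm.mul_apply]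
      exact ((h2 k).trans (h1' _)).trans (ih _)
  have h4 : ∀ k, A.valuation (w (τ k)) ≤ A.valuation (w k) := by
    intro k
    have hp := orderOf_pos τ
    have := h3 (orderOf τ - 1) (τ k)
    rw [← Equiv.Perm.mul_apply, ← pow_succ, Nat.sub_add_cancel hp, pow_orderOf_eq_one] at this
    simpa using this
  have h5 : ∀ k, A.valuation (w k) = A.valuation (w' k) := by
    intro k
    obtain ⟨k, rfl⟩ := τ.surjective k
    exact le_antisymm ((h4 k).trans (h2 k)) (h1' _)
  refine ⟨perm_eq_of_le _ _ fun k => ?_, h5⟩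
  by_contra! hlt
  have h6 := (hd (σ' k) (σ k)).2 hlt
  have h7 := h1 k
  rw [← h5] at h7
  have hne : A.valuation (w k) ≠ 0 := by simpa using hw k
  have h8 : A.valuation (d.1 (σ' k) (σ k)) = 1 := by
    apply mul_right_cancel₀ hne
    rw [one_mul, ← h7]
  exact h6.ne h8

/-- isolated column -/
def Isol (M : Matrix (Fin n) (Fin n) K) (k : Fin n) : Prop :=
  ∃ i, M i k ≠ 0 ∧ (∀ j, j ≠ i → M j k = 0) ∧ (∀ l, l ≠ k → M i l = 0)

theorem det_elem_row (i : Fin n) (u : Fin n → K) (hu : u i = 0) :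
    (1 + Matrix.of fun j l => if l = i then u j else 0 : Matrix (Fin n) (Fin n) K).det = 1 := by
  have := Matrix.det_one_add_replicateCol_mul_replicateRow (ι := Unit) u (Pi.single i (1:K))
  rw [single_one_dotProduct, hu, add_zero] at this
  rw [← this]
  congr 2
  ext j l
  simp [Matrix.mul_apply, Pi.single_apply]

theorem det_elem_col (k : Fin n) (u : Fin n → K) (hu : u k = 0) :
    (1 + Matrix.of fun j l => if j = k then u l else 0 : Matrix (Fin n) (Fin n) K).det = 1 := by
  have := Matrix.det_one_add_replicateCol_mul_replicateRow (ι := Unit) (Pi.single k (1:K)) u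
  rw [dotProduct_single_one, hu, add_zero] at this
  rw [← this]
  congr 2
  ext j l
  simp [Matrix.mul_apply, Pi.single_apply]

theorem exists_pivot (M : Matrix (Fin n) (Fin n) K) (S : Finset (Fin n))
    (hS : ∃ k ∈ S, ∃ i, M i k ≠ 0) : ∃ k ∈ S, ∃ i, M i k ≠ 0 ∧
      (∀ j, A.valuation (M j k) ≤ A.valuation (M i k) ∧
        (i < j → A.valuation (M j k) < A.valuation (M i k))) ∧
      (∀ l ∈ S, A.valuation (M i l) ≤ A.valuation (M i k) ∧
        (l < k → A.valuation (M i l) < A.valuation (M i k))) := by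
  obtain ⟨k0, hk0, i0, h0⟩ := hS
  obtain ⟨p, hp, hmax⟩ := Finset.exists_max_image ((Finset.univ : Finset (Fin n)) ×ˢ S)
    (fun p => A.valuation (M p.1 p.2)) ⟨(i0, k0), by simp [hk0]⟩
  have hmax' : ∀ i, ∀ k ∈ S, A.valuation (M i k) ≤ A.valuation (M p.1 p.2) :=
    fun i k hk => hmax (i, k) (by simp [hk])
  have hpos : A.valuation (M p.1 p.2) ≠ 0 := by
    intro h
    have := hmax' i0 k0 hk0
    rw [h] at this
    simp at this
    exact h0 this
  classical
  obtain ⟨k, hk, hkmin⟩ := Finset.exists_min_image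
    (S.filter fun k => ∃ i, A.valuation (M i k) = A.valuation (M p.1 p.2)) id
    ⟨p.2, by
      rw [Finset.mem_product] at hp
      exact Finset.mem_filter.2 ⟨hp.2, p.1, rfl⟩⟩
  simp only [Finset.mem_filter] at hk hkmin
  obtain ⟨hkS, i1, hi1⟩ := hk
  obtain ⟨i, hi, himax⟩ := Finset.exists_max_image
    (Finset.univ.filter fun i => A.valuation (M i k) = A.valuation (M p.1 p.2)) id
    ⟨i1, by simpa using hi1⟩
  simp only [Finset.mem_filter, Finset.mem_univ, true_and, id] at hi himax hkmin
  refine ⟨k, hkS, i, ?_, ?_, ?_⟩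
  · rw [← hi] at hpos; simpa using hpos
  · intro j
    rw [hi]
    refine ⟨hmax' j k hkS, fun hij => lt_of_le_of_ne (hmax' j k hkS) fun h => ?_⟩
    exact absurd (himax j h) (not_le.2 hij)
  · intro l hl
    rw [hi]
    refine ⟨hmax' i l hl, fun hij => lt_of_le_of_ne (hmax' i l hl) fun h => ?_⟩
    exact absurd (hkmin l ⟨hl, i, h⟩) (not_le.2 hij)

open Classical in
theorem step (g : SpecialLinearGroup (Fin n) K) (h : ¬ ∀ k, Isol g.1 k) :
    ∃ d d' : SpecialLinearGroup (Fin n) K, IsIw A d.1 ∧ IsIw A d'.1 ∧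
      (Finset.univ.filter fun k => ¬ Isol (d * g * d').1 k).card <
      (Finset.univ.filter fun k => ¬ Isol g.1 k).card := by
  push Not at h
  obtain ⟨k0, hk0⟩ := h
  obtain ⟨k, hkS, i, hne, hcol, hrow⟩ := exists_pivot A g.1
    (Finset.univ.filter fun k => ¬ Isol g.1 k) ⟨k0, by simpa using hk0, by
      by_contra! h0
      have := Matrix.det_eq_zero_of_column_eq_zero k0 h0
      rw [g.2] at this
      exact one_ne_zero this⟩
  simp only [Finset.mem_filter, Finset.mem_univ, true_and] at hkS hrow
  set M := g.1 with hM
  have hvpos : 0 < A.valuation (M i k) := by simpa [zero_lt_iff] using hne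
  have hiso : ∀ l, Isol M l → M i l = 0 := by
    rintro l ⟨r, hr, hr1, hr2⟩
    have hlk : k ≠ l := by rintro rfl; exact hkS ⟨r, hr, hr1, hr2⟩
    apply hr1
    rintro rfl
    exact hne (hr2 k hlk)
  have hrow' : ∀ l, A.valuation (M i l) ≤ A.valuation (M i k) ∧
        (l < k → A.valuation (M i l) < A.valuation (M i k)) := by
    intro l
    by_cases hl : Isol M l
    · rw [hiso l hl, map_zero]
      exact ⟨zero_le, fun _ => hvpos⟩
    · exact hrow l hl
  let u : Fin n → K := fun j => if j = i then 0 else - (M j k / M i k)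
  let u' : Fin n → K := fun l => if l = k then 0 else - (M i l / M i k)
  let d : SpecialLinearGroup (Fin n) K := ⟨_, det_elem_row i u (by simp [u])⟩
  let d' : SpecialLinearGroup (Fin n) K := ⟨_, det_elem_col k u' (by simp [u'])⟩
  have hd : IsIw A d.1 := by
    intro j l
    simp only [d, Matrix.add_apply, Matrix.of_apply, Matrix.one_apply, u]
    by_cases hl : l = i
    · subst hl
      by_cases hj : j = l
      · simp [hj]
      · simp only [hj, if_false, if_true, zero_add, Valuation.map_neg, map_div₀]
        exact ⟨div_le_one_of_le₀ (hcol j).1 zero_le, fun h => (div_lt_one₀ hvpos).2 ((hcol j).2 h)⟩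
    · by_cases hj : j = l
      · simp [hl, hj]
      · simp [hl, hj]
  have hd' : IsIw A d'.1 := by
    intro j l
    simp only [d', Matrix.add_apply, Matrix.of_apply, Matrix.one_apply, u']
    by_cases hl : j = k
    · subst hl
      by_cases hj : j = l
      · simp [hj]
      · simp only [hj, Ne.symm hj, if_false, if_true, zero_add, Valuation.map_neg, map_div₀]
        exact ⟨div_le_one_of_le₀ (hrow' l).1 zero_le,
          fun h => (div_lt_one₀ hvpos).2 ((hrow' l).2 h)⟩
    · by_cases hj : j = l
      · subst hj; simp [hl]
      · simp [hl, hj]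
  have hdg : ∀ j l, (d.1 * M) j l = M j l + u j * M i l := by
    intro j l
    simp only [d, Matrix.add_mul, Matrix.one_mul, Matrix.add_apply]
    simp [Matrix.mul_apply]
  have hform : ∀ j l, (d * g * d').1 j l = M j l + u j * M i l + (M j k + u j * M i k) * u' l := by
    intro j l
    change (d.1 * M * d'.1) j l = _
    have : (d.1 * M * d'.1) j l = (d.1 * M) j l + (d.1 * M) j k * u' l := by
      simp only [d', Matrix.mul_add, Matrix.mul_one, Matrix.add_apply]
      simp [Matrix.mul_apply]
    rw [this, hdg, hdg]
  have hcz : ∀ j, j ≠ i → M j k + u j * M i k = 0 := by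
    intro j hj
    simp only [u, hj, if_false]
    field_simp
    ring
  refine ⟨d, d', hd, hd', Finset.card_lt_card ?_⟩
  rw [Finset.ssubset_iff_of_subset]
  · refine ⟨k, by simpa using hkS, ?_⟩
    simp only [Finset.mem_filter, Finset.mem_univ, true_and, not_not]
    refine ⟨i, ?_, ?_, ?_⟩
    · rw [hform]; simpa [u, u'] using hne
    · intro j hj
      rw [hform, hcz j hj]; simp
    · intro l hl
      rw [hform]
      simp only [u, u', hl, if_true, if_false]
      field_simp
      ring
  · intro l
    simp only [Finset.mem_filter, Finset.mem_univ, true_and]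
    contrapose
    intro hl
    have hil := hiso l hl
    obtain ⟨r, hr, hr1, hr2⟩ := hl
    have hkl : k ≠ l := by rintro rfl; exact hkS ⟨r, hr, hr1, hr2⟩
    have hu'l : u' l = 0 := by simp [u', hil]
    have hri : r ≠ i := by rintro rfl; exact hr hil
    have hur : u r = 0 := by simp [u, hr2 k hkl]
    refine ⟨r, ?_, ?_, ?_⟩
    · rw [hform, hil, hu'l]; simpa using hr
    · intro j hj
      rw [hform, hil, hu'l, hr1 j hj]; simp
    · intro m hm
      rw [hform, hur, hr2 m hm, hr2 k hkl]; simp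

open Classical in
theorem exists_isol (N : ℕ) : ∀ (g : SpecialLinearGroup (Fin n) K),
    (Finset.univ.filter fun k => ¬ Isol g.1 k).card ≤ N →
    ∃ d d' : SpecialLinearGroup (Fin n) K, IsIw A d.1 ∧ IsIw A d'.1 ∧
      ∀ k, Isol (d * g * d').1 k := by
  have h1 : IsIw A (1 : SpecialLinearGroup (Fin n) K).1 := by
    intro i j
    change A.valuation ((1 : Matrix (Fin n) (Fin n) K) i j) ≤ 1 ∧
      (j < i → A.valuation ((1 : Matrix (Fin n) (Fin n) K) i j) < 1)
    rw [Matrix.one_apply]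
    by_cases h : i = j
    · simp [h]
    · simp [h]
  induction N with
  | zero =>
    intro g hg
    refine ⟨1, 1, h1, h1, fun k => ?_⟩
    simp only [Nat.le_zero, Finset.card_eq_zero] at hg
    by_contra hk
    have : k ∈ (Finset.univ.filter fun k => ¬ Isol g.1 k) := by simpa using hk
    rw [hg] at this
    simp at this
  | succ N ih =>
    intro g hg
    by_cases h : ∀ k, Isol g.1 k
    · exact ⟨1, 1, h1, h1, by simpa using h⟩
    · obtain ⟨d, d', hd, hd', hlt⟩ := step A g h
      obtain ⟨e, e', he, he', h2⟩ := ih (d * g * d') (by lia)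
      refine ⟨e * d, d' * e', he.mul A hd, hd'.mul A he', ?_⟩
      have : e * d * g * (d' * e') = e * (d * g * d') * e' := by group
      rw [this]
      exact h2

theorem exists_mono (g : SpecialLinearGroup (Fin n) K) :
    ∃ d d' : SpecialLinearGroup (Fin n) K, IsIw A d.1 ∧ IsIw A d'.1 ∧
      ∃ (σ : Equiv.Perm (Fin n)) (w : Fin n → K), (∀ k, w k ≠ 0) ∧
      (d * g * d').1 = Matrix.of fun i k => if i = σ k then w k else 0 := by
  obtain ⟨d, d', hd, hd', h⟩ := exists_isol A _ g le_rfl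
  refine ⟨d, d', hd, hd', ?_⟩
  choose s h0 h1 h2 using h
  have hinj : Function.Injective s := by
    intro k l hkl
    by_contra hne
    have := h2 k l (Ne.symm hne)
    rw [hkl] at this
    exact h0 l this
  refine ⟨Equiv.ofBijective s (Finite.injective_iff_bijective.1 hinj),
    fun k => (d * g * d').1 (s k) k, h0, ?_⟩
  ext i k
  simp only [Matrix.of_apply, Equiv.ofBijective_apply]
  split_ifs with hik
  · rw [hik]
  · exact h1 k i hik

theorem det_mono (σ : Equiv.Perm (Fin n)) (w : Fin n → K) :
    (Matrix.of fun i k => if i = σ k then w k else 0 : Matrix (Fin n) (Fin n) K).det =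
      ((Equiv.Perm.sign σ : ℤ) : K) * ∏ k, w k := by
  have : (Matrix.of fun i k => if i = σ k then w k else 0 : Matrix (Fin n) (Fin n) K) =
      (Matrix.diagonal w).submatrix σ.symm id := by
    ext i k
    simp only [Matrix.of_apply, Matrix.submatrix_apply, Matrix.diagonal_apply, id]
    by_cases h : i = σ k
    · subst h; simp
    · rw [if_neg h, if_neg]
      intro h'; apply h; rw [← h']; simp
  rw [this, Matrix.det_permute, Matrix.det_diagonal, Equiv.Perm.sign_symm]

end Abstract

theorem Dzero_iff (F : Type) [Field F] {n : ℕ} (d : Matrix.SpecialLinearGroup (Fin n) (Ktwo F)) :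
    d ∈ Dzero F n ↔ IsIw (OVal F) d.1 := by
  refine forall_congr' fun i => forall_congr' fun j => ?_
  rw [OVal_le, OVal_lt]
  tauto

theorem lifting_iff (F : Type) [Field F] {n : ℕ} (σ : Equiv.Perm (Fin n)) (a b : Fin n → ℤ)
    (m : Matrix.SpecialLinearGroup (Fin n) (Ktwo F)) (h : IsLifting F n σ a b m) :
    ∃ w : Fin n → Ktwo F, (∀ k, w k ≠ 0) ∧
      (∀ k, (OVal F).valuation (w k) = (OVal F).valuation (tone F ^ a k * ttwo F ^ b k)) ∧
      m.1 = Matrix.of fun i k => if i = σ k then w k else 0 := by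
  obtain ⟨ε, hε, hm⟩ := h
  refine ⟨fun k => ε k * tone F ^ a k * ttwo F ^ b k, fun k => ?_, fun k => ?_, ?_⟩
  · beta_reduce
    rw [mul_assoc]
    refine mul_ne_zero ?_ (mono_ne F _ _)
    rcases hε k with h | h <;> simp [h]
  · beta_reduce
    rw [mul_assoc, map_mul]
    rcases hε k with h | h <;> simp [h, Valuation.map_neg]
  · ext1 i k
    exact hm i k

theorem exist_part (F : Type) [Field F] (n : ℕ) (hn : 2 ≤ n)
    (g : Matrix.SpecialLinearGroup (Fin n) (Ktwo F)) :
      ∃ (σ : Equiv.Perm (Fin n)) (a b : Fin n → ℤ),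
        (∑ k, a k) = 0 ∧ (∑ k, b k) = 0 ∧
        ∃ m, IsLifting F n σ a b m ∧
          ∃ d ∈ Dzero F n, ∃ d' ∈ Dzero F n, g = d * m * d' := by
  obtain ⟨d, d', hd, hd', σ, w, hw, hg⟩ := exists_mono (OVal F) g
  have hdet := det_mono σ w
  rw [← hg, (d * g * d').2] at hdet
  choose ab hab using fun k => OVal_fact F (w k) (hw k)
  obtain ⟨s, hs⟩ : ∃ s : Ktwo F, s = ((Equiv.Perm.sign σ : ℤ) : Ktwo F) := ⟨_, rfl⟩
  have hs1 : s = 1 ∨ s = -1 := by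
    rcases Int.units_eq_one_or (Equiv.Perm.sign σ) with h | h <;> simp [hs, h]
  have hss : s * s = 1 := by rcases hs1 with h | h <;> rw [h] <;> ring
  have hvs : (OVal F).valuation s = 1 := by rcases hs1 with h | h <;> simp [h, Valuation.map_neg]
  rw [← hs] at hdet
  have hprod : ∏ k, (tone F ^ (ab k).1 * ttwo F ^ (ab k).2) =
      tone F ^ (∑ k, (ab k).1) * ttwo F ^ (∑ k, (ab k).2) := by
    have : ∀ S : Finset (Fin n), ∏ k ∈ S, (tone F ^ (ab k).1 * ttwo F ^ (ab k).2) =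
      tone F ^ (∑ k ∈ S, (ab k).1) * ttwo F ^ (∑ k ∈ S, (ab k).2) := by
      intro S
      induction S using Finset.induction_on with
      | empty => simp
      | insert k S hk ih =>
        rw [Finset.prod_insert hk, Finset.sum_insert hk, Finset.sum_insert hk, ih, mono_mul]
    exact this _
  have hv := congrArg (OVal F).valuation hdet
  rw [map_mul, hvs, one_mul, map_one, map_prod, Finset.prod_congr rfl (fun k _ => hab k),
    ← map_prod, hprod] at hv
  obtain ⟨ha, hb⟩ := OVal_mono F _ _ hv.symm
  rw [ha, hb, zpow_zero, zpow_zero, one_mul] at hprod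
  let k0 : Fin n := ⟨0, by lia⟩
  let ε : Fin n → Ktwo F := fun k => if k = k0 then s else 1
  have hε : ∀ k, ε k = 1 ∨ ε k = -1 := by
    intro k
    by_cases h : k = k0
    · simp only [ε, h, if_true]; exact hs1
    · simp [ε, h]
  have hε0 : ∀ k, ε k ≠ 0 := fun k => by rcases hε k with h | h <;> simp [h]
  have hεv : ∀ k, (OVal F).valuation (ε k) = 1 := fun k => by
    rcases hε k with h | h <;> simp [h, Valuation.map_neg]
  have hεp : ∏ k, ε k = s := by simp [ε]
  let w' : Fin n → Ktwo F := fun k => ε k * tone F ^ (ab k).1 * ttwo F ^ (ab k).2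
  have hw'v : ∀ k, (OVal F).valuation (w' k) = (OVal F).valuation (w k) := by
    intro k
    simp only [w']
    rw [mul_assoc, map_mul, hεv, one_mul, hab]
  have hw'0 : ∀ k, w' k ≠ 0 := by
    intro k
    simp only [w']
    rw [mul_assoc]
    exact mul_ne_zero (hε0 k) (mono_ne F _ _)
  have hw'p : ∏ k, w' k = s := by
    simp only [w', mul_assoc]
    rw [Finset.prod_mul_distrib, hprod, hεp, mul_one]
  have hm' := det_mono σ w'
  rw [hw'p, ← hs, hss] at hm'
  let m : Matrix.SpecialLinearGroup (Fin n) (Ktwo F) := ⟨_, hm'⟩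
  have hwp : ∏ k, w k = s := by
    calc _ = s * s * ∏ k, w k := by rw [hss, one_mul]
      _ = s := by rw [mul_assoc, ← hdet, mul_one]
  have hs0 : s ≠ 0 := left_ne_zero_of_mul_eq_one hss
  let e : Matrix.SpecialLinearGroup (Fin n) (Ktwo F) :=
    ⟨Matrix.diagonal fun k => w k / w' k, by
      rw [Matrix.det_diagonal, Finset.prod_div_distrib, hw'p, hwp, div_self hs0]⟩
  have he : IsIw (OVal F) e.1 := by
    intro i j
    change (OVal F).valuation (Matrix.diagonal (fun k => w k / w' k) i j) ≤ 1 ∧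
      (j < i → (OVal F).valuation (Matrix.diagonal (fun k => w k / w' k) i j) < 1)
    by_cases h : i = j
    · subst h
      rw [Matrix.diagonal_apply_eq, map_div₀, hw'v, div_self (by simpa using hw i)]
      simp
    · rw [Matrix.diagonal_apply_ne _ h]; simp
  have hme : m * e = d * g * d' := by
    apply Subtype.ext
    rw [hg]
    change (Matrix.of fun i k => if i = σ k then w' k else 0) *
      Matrix.diagonal (fun k => w k / w' k) = _
    ext1 i k
    rw [Matrix.mul_diagonal]
    simp only [Matrix.of_apply]
    split_ifs
    · rw [mul_div_cancel₀ _ (hw'0 k)]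
    · rw [zero_mul]
  refine ⟨σ, fun k => (ab k).1, fun k => (ab k).2, ha, hb, m, ⟨ε, hε, fun i k => rfl⟩,
    d⁻¹, (Dzero_iff F _).2 (hd.inv), e * d'⁻¹, (Dzero_iff F _).2 (he.mul _ hd'.inv), ?_⟩
  have : d⁻¹ * m * (e * d'⁻¹) = d⁻¹ * (m * e) * d'⁻¹ := by group
  rw [this, hme]
  group

theorem double_iwahori_coset_decomposition (F : Type) [Field F] [Fintype F]
    (n : ℕ) (hn : 2 ≤ n) :
    (∀ g : Matrix.SpecialLinearGroup (Fin n) (Ktwo F),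
      ∃ (σ : Equiv.Perm (Fin n)) (a b : Fin n → ℤ),
        (∑ k, a k) = 0 ∧ (∑ k, b k) = 0 ∧
        ∃ m, IsLifting F n σ a b m ∧
          ∃ d ∈ Dzero F n, ∃ d' ∈ Dzero F n, g = d * m * d') ∧
    (∀ (σ σ' : Equiv.Perm (Fin n)) (a b a' b' : Fin n → ℤ),
      (∑ k, a k) = 0 → (∑ k, b k) = 0 → (∑ k, a' k) = 0 → (∑ k, b' k) = 0 →
      ∀ m m', IsLifting F n σ a b m → IsLifting F n σ' a' b' m' →
        (∃ g, (∃ d ∈ Dzero F n, ∃ d' ∈ Dzero F n, g = d * m * d') ∧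
              (∃ d ∈ Dzero F n, ∃ d' ∈ Dzero F n, g = d * m' * d')) →
        σ = σ' ∧ a = a' ∧ b = b') := by
  
  refine ⟨exist_part F n hn, ?_⟩
  rintro σ σ' a b a' b' - - - - m m' hm hm' ⟨g, ⟨d1, h1, d2, h2, hg⟩, d3, h3, d4, h4, hg'⟩
  rw [Dzero_iff] at h1 h2 h3 h4
  obtain ⟨w, hw, hv, hmw⟩ := lifting_iff F σ a b m hm
  obtain ⟨w', hw', hv', hmw'⟩ := lifting_iff F σ' a' b' m' hm'
  have e : (d3⁻¹ * d1) * m = m' * (d4 * d2⁻¹) := by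
    have h5 : d1 * m * d2 = d3 * m' * d4 := hg.symm.trans hg'
    calc (d3⁻¹ * d1) * m = d3⁻¹ * (d1 * m * d2) * d2⁻¹ := by group
      _ = d3⁻¹ * (d3 * m' * d4) * d2⁻¹ := by rw [h5]
      _ = _ := by group
  have e' : (d3⁻¹ * d1).1 * m.1 = m'.1 * (d4 * d2⁻¹).1 := congrArg Subtype.val e
  rw [hmw, hmw'] at e'
  obtain ⟨r1, r2⟩ := uniq_abs (OVal F) σ σ' w w' hw _ _ (h3.inv.mul _ h1) (h4.mul _ h2.inv) e'
  have r3 := fun k => OVal_mono_inj F (a k) (b k) (a' k) (b' k)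
    (by rw [← hv, ← hv', r2])
  exact ⟨r1, funext fun k => (r3 k).1, funext fun k => (r3 k).2⟩
end
end

section
/- There exists a central extension 1 → ℤ → E → A → 1 whose commutator pairing equals β, i.e. for all x, y ∈ A and any lifts x̃, ỹ ∈ E of x, y, the commutator x̃·ỹ·x̃^{-1}·ỹ^{-1} is the image of β(x,y) ∈ ℤ under the central inclusion. Moreover this extension is unique up to equivalence: any two central extensions of A by ℤ with the same commutator pairing β are equivalent as extensions. -/
/-!
For a finitely generated free abelian group `A` and an alternating `ℤ`-bilinear
form `β : A × A → ℤ`, there exists a central extension `1 → ℤ → E → A → 1`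
whose commutator pairing is `β`, and it is unique up to equivalence of
extensions.
-/

/-- The data of an extension of the abelian group `A` by `ℤ`: a group `E`
together with homomorphisms `ℤ → E → A`. -/
structure ExtOfByInt (A : Type) [AddCommGroup A] where
  /-- The middle group of the extension. -/
  E : Type
  /-- The group structure on the middle group. -/
  [grp : Group E]
  /-- The inclusion of the kernel `ℤ`. -/
  ι : Multiplicative ℤ →* E
  /-- The projection onto `A`. -/
  π : E →* Multiplicative A

attribute [instance] ExtOfByInt.grp

/-- `X` is a central extension `1 → ℤ → E → A → 1` whose commutator pairing
(the commutator of lifts, which only depends on the images in `A`) is given by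
the bilinear form `β`. -/
def ExtOfByInt.IsCentralWithPairing {A : Type} [AddCommGroup A]
    (β : A →+ A →+ ℤ) (X : ExtOfByInt A) : Prop :=
  Function.Injective X.ι ∧ Function.Surjective X.π ∧
  (∀ z : Multiplicative ℤ, X.ι z ∈ Subgroup.center X.E) ∧
  X.ι.range = X.π.ker ∧
  ∀ x y : X.E, x * y * x⁻¹ * y⁻¹ =
    X.ι (Multiplicative.ofAdd (β (X.π x).toAdd (X.π y).toAdd))

theorem cext_exists_b {A : Type} [AddCommGroup A]
    [Module.Free ℤ A] [Module.Finite ℤ A]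
    (β : A →+ A →+ ℤ) (halt : ∀ x : A, β x x = 0) :
    ∃ b : A →ₗ[ℤ] A →ₗ[ℤ] ℤ, ∀ x y, b x y - b y x = β x y := by
  classical
  let B := Module.finBasis ℤ A
  have hskew : ∀ x y, β x y = - β y x := by
    intro x y
    have h := halt (x + y)
    simp only [map_add, AddMonoidHom.add_apply, halt] at h
    linarith
  let b : A →ₗ[ℤ] A →ₗ[ℤ] ℤ :=
    B.constr ℤ (fun i => B.constr ℤ (fun j => if j < i then β (B i) (B j) else 0))
  let β' : A →ₗ[ℤ] A →ₗ[ℤ] ℤ :=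
    LinearMap.mk₂ ℤ (fun x y => β x y) (by simp) (by simp) (by simp) (by simp)
  have h : b - b.flip = β' := by
    refine LinearMap.ext_basis B B ?_
    intro i j
    simp only [b, β', LinearMap.sub_apply, LinearMap.flip_apply, Module.Basis.constr_basis,
      LinearMap.mk₂_apply]
    rcases lt_trichotomy i j with h | h | h
    · simp [h, h.not_gt, hskew (B i) (B j)]
    · subst h
      simp [halt]
    · simp [h, h.not_gt]
  refine ⟨b, fun x y => ?_⟩
  have := LinearMap.congr_fun₂ h x y
  simpa [β'] using this

/-- The twisted product. -/
@[ext]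
structure CextTw {A : Type} [AddCommGroup A] (b : A →ₗ[ℤ] A →ₗ[ℤ] ℤ) where
  /-- integer part -/
  n : ℤ
  /-- base part -/
  a : A

instance cextTwGroup {A : Type} [AddCommGroup A] (b : A →ₗ[ℤ] A →ₗ[ℤ] ℤ) : Group (CextTw b) where
  mul p q := ⟨p.n + q.n + b p.a q.a, p.a + q.a⟩
  one := ⟨0, 0⟩
  inv p := ⟨-p.n + b p.a p.a, -p.a⟩
  mul_assoc p q r := by
    change CextTw.mk _ _ = CextTw.mk _ _
    ext
    · change p.n + q.n + b p.a q.a + r.n + b (p.a + q.a) r.a =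
        p.n + (q.n + r.n + b q.a r.a) + b p.a (q.a + r.a)
      simp only [map_add, LinearMap.add_apply]; ring
    · exact add_assoc _ _ _
  one_mul p := by
    change CextTw.mk _ _ = p
    ext
    · change 0 + p.n + b 0 p.a = p.n
      simp
    · exact zero_add _
  mul_one p := by
    change CextTw.mk _ _ = p
    ext
    · change p.n + 0 + b p.a 0 = p.n
      simp
    · exact add_zero _
  inv_mul_cancel p := by
    change CextTw.mk _ _ = CextTw.mk _ _
    ext
    · change -p.n + b p.a p.a + p.n + b (-p.a) p.a = 0
      simp
    · exact neg_add_cancel _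

theorem cextTw_mul {A : Type} [AddCommGroup A] (b : A →ₗ[ℤ] A →ₗ[ℤ] ℤ) (p q : CextTw b) :
    p * q = ⟨p.n + q.n + b p.a q.a, p.a + q.a⟩ := rfl

theorem cextTw_one {A : Type} [AddCommGroup A] (b : A →ₗ[ℤ] A →ₗ[ℤ] ℤ) :
    (1 : CextTw b) = ⟨0, 0⟩ := rfl

theorem cext_exists {A : Type} [AddCommGroup A] (β : A →+ A →+ ℤ)
    (b : A →ₗ[ℤ] A →ₗ[ℤ] ℤ) (hb : ∀ x y, b x y - b y x = β x y) :
    ∃ X : ExtOfByInt A, X.IsCentralWithPairing β := by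
  refine ⟨{ E := CextTw b
            ι := { toFun := fun z => ⟨z.toAdd, 0⟩
                   map_one' := rfl
                   map_mul' := fun x y => by simp [cextTw_mul] }
            π := { toFun := fun p => Multiplicative.ofAdd p.a
                   map_one' := rfl
                   map_mul' := fun x y => rfl } }, ?_, ?_, ?_, ?_, ?_⟩
  · intro x y h
    exact congrArg CextTw.n h
  · intro x
    exact ⟨⟨0, x.toAdd⟩, rfl⟩
  · intro z
    rw [Subgroup.mem_center_iff]
    intro g
    simp [cextTw_mul, add_comm]
  · ext p
    simp only [MonoidHom.mem_range, MonoidHom.mem_ker, MonoidHom.coe_mk, OneHom.coe_mk]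
    constructor
    · rintro ⟨z, rfl⟩; rfl
    · intro h
      exact ⟨Multiplicative.ofAdd p.n, CextTw.ext rfl (Eq.symm h)⟩
  · intro x y
    rw [mul_inv_eq_iff_eq_mul, mul_inv_eq_iff_eq_mul]
    simp only [cextTw_mul, MonoidHom.coe_mk, OneHom.coe_mk, toAdd_ofAdd, ← hb]
    ext
    · simp; ring
    · simp [add_comm]

theorem cext_split {A : Type} [AddCommGroup A] [Module.Free ℤ A] {Q : Type} [Group Q]
    (hc : ∀ a b : Q, a * b = b * a) (f : Q →* Multiplicative A) (hf : Function.Surjective f) :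
    ∃ s : Multiplicative A →* Q, ∀ a, f (s a) = a := by
  letI : CommGroup Q := { (inferInstance : Group Q) with mul_comm := hc }
  let f' : Additive Q →ₗ[ℤ] A := (MonoidHom.toAdditiveLeft f).toIntLinearMap
  obtain ⟨s, hs⟩ := Module.projective_lifting_property f' LinearMap.id hf
  refine ⟨AddMonoidHom.toMultiplicativeLeft s.toAddMonoidHom, fun a => ?_⟩
  exact LinearMap.congr_fun hs a.toAdd

theorem cext_sub {A : Type} [AddCommGroup A] [Module.Free ℤ A] {P : Type} [Group P]
    (f : P →* Multiplicative A) (hf : Function.Surjective f) (D : Subgroup P) [D.Normal]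
    (hD : D ≤ f.ker) (hc : ∀ a b : P, a * b * a⁻¹ * b⁻¹ ∈ D) :
    ∃ G : Subgroup P, D ≤ G ∧ (∀ a, ∃ g ∈ G, f g = a) ∧ ∀ g ∈ G, f g = 1 → g ∈ D := by
  have hcomm : ∀ a b : P ⧸ D, a * b = b * a := by
    intro a b
    induction a using QuotientGroup.induction_on with | _ a =>
    induction b using QuotientGroup.induction_on with | _ b =>
    have := (QuotientGroup.eq_one_iff _).2 (hc a b)
    simp only [QuotientGroup.mk_mul, QuotientGroup.mk_inv] at this
    rwa [mul_inv_eq_one, mul_inv_eq_iff_eq_mul] at this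
  let q : P ⧸ D →* Multiplicative A := QuotientGroup.lift D f hD
  have hq : ∀ p : P, q (QuotientGroup.mk' D p) = f p := fun p => rfl
  obtain ⟨s, hs⟩ := cext_split hcomm q (fun a => by
    obtain ⟨p, hp⟩ := hf a
    exact ⟨QuotientGroup.mk' D p, hp⟩)
  refine ⟨s.range.comap (QuotientGroup.mk' D), ?_, ?_, ?_⟩
  · intro d hd
    refine ⟨1, ?_⟩
    rw [map_one]
    exact ((QuotientGroup.eq_one_iff d).2 hd).symm
  · intro a
    obtain ⟨g, hg⟩ := QuotientGroup.mk'_surjective D (s a)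
    exact ⟨g, ⟨a, hg.symm⟩, by rw [← hq, hg, hs]⟩
  · rintro g ⟨a, ha⟩ h1
    rw [← hq, ← ha, hs] at h1
    rw [h1, map_one] at ha
    exact (QuotientGroup.eq_one_iff g).1 ha.symm

theorem cext_graph {A : Type} [AddCommGroup A] [Module.Free ℤ A] (β : A →+ A →+ ℤ)
    (X Y : ExtOfByInt A) (hX : X.IsCentralWithPairing β) (hY : Y.IsCentralWithPairing β) :
    ∃ G : Subgroup (X.E × Y.E), (∀ g ∈ G, X.π g.1 = Y.π g.2) ∧ (∀ z, (X.ι z, Y.ι z) ∈ G) ∧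
      (∀ a, ∃ g ∈ G, X.π g.1 = a) ∧ (∀ g ∈ G, X.π g.1 = 1 → ∃ z, g = (X.ι z, Y.ι z)) := by
  obtain ⟨-, sX, cX, rX, pX⟩ := hX
  obtain ⟨-, sY, cY, rY, pY⟩ := hY
  have kX : ∀ z, X.π (X.ι z) = 1 := fun z => by
    rw [← MonoidHom.mem_ker, ← rX]; exact ⟨z, rfl⟩
  have kY : ∀ z, Y.π (Y.ι z) = 1 := fun z => by
    rw [← MonoidHom.mem_ker, ← rY]; exact ⟨z, rfl⟩
  let P : Subgroup (X.E × Y.E) :=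
    (X.π.comp (MonoidHom.fst X.E Y.E)).eqLocus (Y.π.comp (MonoidHom.snd X.E Y.E))
  have hP : ∀ g : X.E × Y.E, g ∈ P ↔ X.π g.1 = Y.π g.2 := fun g => Iff.rfl
  let f : P →* Multiplicative A := (X.π.comp (MonoidHom.fst X.E Y.E)).comp P.subtype
  let D : Subgroup P := (X.ι.prod Y.ι).range.comap P.subtype
  have hDm : ∀ p : P, p ∈ D ↔ ∃ z, (X.ι z, Y.ι z) = p.1 := fun p => Iff.rfl
  have nD : D.Normal := by
    constructor
    intro d hd g
    obtain ⟨z, hz⟩ := (hDm d).1 hd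
    refine (hDm _).2 ⟨z, ?_⟩
    have h1 := Subgroup.mem_center_iff.1 (cX z) g.1.1
    have h2 := Subgroup.mem_center_iff.1 (cY z) g.1.2
    simp only [Subgroup.coe_mul, Subgroup.coe_inv, ← hz]
    ext
    · simp [h1]
    · simp [h2]
  obtain ⟨G, hDG, hs, hk⟩ := cext_sub f (fun a => by
      obtain ⟨x, hx⟩ := sX a
      obtain ⟨y, hy⟩ := sY a
      exact ⟨⟨(x, y), (hP _).2 (hx.trans hy.symm)⟩, hx⟩) D
    (fun d hd => by
      obtain ⟨z, hz⟩ := (hDm d).1 hd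
      change X.π d.1.1 = 1
      rw [← hz, kX])
    (fun a b => by
      refine (hDm _).2 ⟨Multiplicative.ofAdd (β (X.π a.1.1).toAdd (X.π b.1.1).toAdd), ?_⟩
      ext
      · exact (pX _ _).symm
      · have ha := (hP _).1 a.2
        have hb := (hP _).1 b.2
        rw [ha, hb]
        exact (pY _ _).symm)
  refine ⟨G.map P.subtype, ?_, ?_, ?_, ?_⟩
  · rintro _ ⟨g, -, rfl⟩
    exact (hP _).1 g.2
  · intro z
    exact ⟨⟨(X.ι z, Y.ι z), (hP _).2 ((kX z).trans (kY z).symm)⟩,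
      hDG ((hDm _).2 ⟨z, rfl⟩), rfl⟩
  · intro a
    obtain ⟨g, hg, h⟩ := hs a
    exact ⟨g.1, ⟨g, hg, rfl⟩, h⟩
  · rintro _ ⟨g, hg, rfl⟩ h
    obtain ⟨z, hz⟩ := (hDm g).1 (hk g hg h)
    exact ⟨z, hz.symm⟩

theorem cext_unique {A : Type} [AddCommGroup A] [Module.Free ℤ A] (β : A →+ A →+ ℤ)
    (X Y : ExtOfByInt A) (hX : X.IsCentralWithPairing β) (hY : Y.IsCentralWithPairing β) :
    ∃ e : X.E ≃* Y.E, (∀ z : Multiplicative ℤ, e (X.ι z) = Y.ι z) ∧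
        (∀ x : X.E, Y.π (e x) = X.π x) := by
  obtain ⟨G, hG, hz, hs, hk⟩ := cext_graph β X Y hX hY
  obtain ⟨iX, -, -, rX, -⟩ := hX
  obtain ⟨iY, sY, -, rY, -⟩ := hY
  have ex : ∀ x, ∃ y, (x, y) ∈ G := by
    intro x
    obtain ⟨g, hg, h⟩ := hs (X.π x)
    have : g.1⁻¹ * x ∈ X.π.ker := by simp [MonoidHom.mem_ker, h]
    rw [← rX] at this
    obtain ⟨z, h'⟩ := this
    refine ⟨g.2 * Y.ι z, ?_⟩
    have := G.mul_mem hg (hz z)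
    rw [h'] at this
    simpa [Prod.mul_def] using this
  have ey : ∀ y, ∃ x, (x, y) ∈ G := by
    intro y
    obtain ⟨g, hg, h⟩ := hs (Y.π y)
    rw [hG g hg] at h
    have : g.2⁻¹ * y ∈ Y.π.ker := by simp [MonoidHom.mem_ker, h]
    rw [← rY] at this
    obtain ⟨z, h'⟩ := this
    refine ⟨g.1 * X.ι z, ?_⟩
    have := G.mul_mem hg (hz z)
    rw [h'] at this
    simpa [Prod.mul_def] using this
  have ux : ∀ x y y', (x, y) ∈ G → (x, y') ∈ G → y = y' := by
    intro x y y' h h'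
    have := G.mul_mem (G.inv_mem h) h'
    obtain ⟨z, hz⟩ := hk _ this (by simp)
    have h1 : 1 = X.ι z := by simpa using congrArg Prod.fst hz
    have h2 : y⁻¹ * y' = Y.ι z := by simpa using congrArg Prod.snd hz
    rw [iX (h1.symm.trans (map_one _).symm), map_one] at h2
    exact inv_mul_eq_one.1 h2
  have uy : ∀ x x' y, (x, y) ∈ G → (x', y) ∈ G → x = x' := by
    intro x x' y h h'
    have := G.mul_mem (G.inv_mem h) h'
    obtain ⟨z, hz⟩ := hk _ this (by rw [hG _ this]; simp)
    have h1 : 1 = Y.ι z := by simpa using congrArg Prod.snd hz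
    have h2 : x⁻¹ * x' = X.ι z := by simpa using congrArg Prod.fst hz
    rw [iY (h1.symm.trans (map_one _).symm), map_one] at h2
    exact inv_mul_eq_one.1 h2
  choose u hu using ex
  choose v hv using ey
  refine ⟨{ toFun := u, invFun := v
            left_inv := fun x => uy _ _ _ (hv (u x)) (hu x)
            right_inv := fun y => ux _ _ _ (hu (v y)) (hv y)
            map_mul' := fun x x' => ux _ _ _ (hu (x * x')) (G.mul_mem (hu x) (hu x')) },
    fun z => ux _ _ _ (hu (X.ι z)) (hz z), fun x => (hG _ (hu x)).symm⟩

theorem central_extension_exists_unique (A : Type) [AddCommGroup A]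
    [Module.Free ℤ A] [Module.Finite ℤ A]
    (β : A →+ A →+ ℤ) (halt : ∀ x : A, β x x = 0) :
    (∃ X : ExtOfByInt A, X.IsCentralWithPairing β) ∧
    (∀ X Y : ExtOfByInt A, X.IsCentralWithPairing β → Y.IsCentralWithPairing β →
      ∃ e : X.E ≃* Y.E, (∀ z : Multiplicative ℤ, e (X.ι z) = Y.ι z) ∧
        (∀ x : X.E, Y.π (e x) = X.π x)) := by
  obtain ⟨b, hb⟩ := cext_exists_b β halt
  exact ⟨cext_exists β b hb, cext_unique β⟩
end

section
/- For every g ∈ SL_n(F((t))) there exist a unique permutation σ ∈ S_n and a unique vector a ∈ ℤ^n with Σ_k a_k = 0 such that g ∈ D'·m·I for some monomial matrix m ∈ SL_n(F((t))) whose nonzero entries are exactly m_{σ(k),k} = ε_k·t^{a_k} with ε_k ∈ {1,−1}; uniqueness means that if m and m' are such monomial matrices attached to (σ,a) and (σ',a') and the sets D'·m·I and D'·m'·I intersect, then (σ,a) = (σ',a'). -/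
/-!
Iwasawa–Bruhat type decomposition for `SL_n(F((t)))` with respect to the pair
`(D', I)`, where `D' = T(F[[t]])·N(F((t)))` is the "connected component of
unity" of the Borel subgroup and `I` is the Iwahori subgroup: every
`g ∈ SL_n(F((t)))` lies in `D'·m·I` for a monomial matrix `m` attached to a
unique element `(σ, a)` of the affine Weyl group.
-/

noncomputable section

/-- `f ∈ F[[t]]`, i.e. the Laurent series `f` has no negative coefficients. -/
def LaurentIsIntegral (F : Type) [Field F] (f : LaurentSeries F) : Prop :=
  ∀ m : ℤ, m < 0 → f.coeff m = 0

/-- The local parameter `t` of `F((t))`. -/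
def tparam (F : Type) [Field F] : LaurentSeries F := HahnSeries.single 1 1

/-- `D' = T(F[[t]])·N(F((t)))`: upper triangular matrices in `SL_n(F((t)))` all of
whose diagonal entries lie in `F[[t]]ˣ` (power series with nonzero constant term). -/
def ConnBorel (F : Type) [Field F] (n : ℕ) :
    Set (Matrix.SpecialLinearGroup (Fin n) (LaurentSeries F)) :=
  {g | (∀ i j : Fin n, j < i → (g : Matrix (Fin n) (Fin n) (LaurentSeries F)) i j = 0) ∧
    ∀ i : Fin n, LaurentIsIntegral F ((g : Matrix (Fin n) (Fin n) (LaurentSeries F)) i i) ∧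
      ((g : Matrix (Fin n) (Fin n) (LaurentSeries F)) i i).coeff 0 ≠ 0}

/-- The Iwahori subgroup of `SL_n(F((t)))`: matrices with entries in `F[[t]]`
whose reduction mod `t` is upper triangular. -/
def Iwahori (F : Type) [Field F] (n : ℕ) :
    Set (Matrix.SpecialLinearGroup (Fin n) (LaurentSeries F)) :=
  {g | (∀ i j : Fin n, LaurentIsIntegral F ((g : Matrix (Fin n) (Fin n) (LaurentSeries F)) i j)) ∧
    ∀ i j : Fin n, j < i → ((g : Matrix (Fin n) (Fin n) (LaurentSeries F)) i j).coeff 0 = 0}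

/-- `m` is a monomial matrix attached to `(σ, a)`: its nonzero entries are exactly
`m_{σ k, k} = ε_k · t^{a_k}` with signs `ε_k ∈ {1, -1}`. -/
def IsAffineLifting (F : Type) [Field F] (n : ℕ) (σ : Equiv.Perm (Fin n))
    (a : Fin n → ℤ) (m : Matrix.SpecialLinearGroup (Fin n) (LaurentSeries F)) : Prop :=
  ∃ ε : Fin n → LaurentSeries F, (∀ k, ε k = 1 ∨ ε k = -1) ∧
    ∀ i k : Fin n, (m : Matrix (Fin n) (Fin n) (LaurentSeries F)) i k =
      if i = σ k then ε k * (tparam F) ^ (a k) else 0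

theorem zz_int_iff (F : Type) [Field F] (f : LaurentSeries F) :
    LaurentIsIntegral F f ↔ ∃ p : PowerSeries F, HahnSeries.ofPowerSeries ℤ F p = f := by
  constructor
  · intro h
    refine ⟨PowerSeries.mk fun k => f.coeff (k : ℤ), ?_⟩
    ext m
    rw [PowerSeries.coeff_coe]
    split_ifs with hm
    · exact (h m hm).symm
    · rw [PowerSeries.coeff_mk]
      congr 1
      omega
  · rintro ⟨p, rfl⟩ m hm
    rw [PowerSeries.coeff_coe, if_pos hm]

theorem zz_coeff0 (F : Type) [Field F] (p : PowerSeries F) :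
    (HahnSeries.ofPowerSeries ℤ F p).coeff 0 = PowerSeries.constantCoeff p := by
  rw [PowerSeries.coeff_coe]
  simp

theorem zz_int_mul (F : Type) [Field F] {f g : LaurentSeries F}
    (hf : LaurentIsIntegral F f) (hg : LaurentIsIntegral F g) :
    LaurentIsIntegral F (f * g) ∧ (f * g).coeff 0 = f.coeff 0 * g.coeff 0 := by
  obtain ⟨p, rfl⟩ := (zz_int_iff F f).1 hf
  obtain ⟨q, rfl⟩ := (zz_int_iff F g).1 hg
  rw [← map_mul]
  refine ⟨(zz_int_iff F _).2 ⟨_, rfl⟩, ?_⟩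
  rw [zz_coeff0, zz_coeff0, zz_coeff0, map_mul]

theorem zz_int_sum (F : Type) [Field F] {ι : Type} (s : Finset ι) (f : ι → LaurentSeries F)
    (hf : ∀ i ∈ s, LaurentIsIntegral F (f i)) : LaurentIsIntegral F (∑ i ∈ s, f i) := by
  intro m hm
  rw [HahnSeries.coeff_sum]
  exact Finset.sum_eq_zero fun i hi => hf i hi m hm

theorem zz_int_inv (F : Type) [Field F] {f : LaurentSeries F}
    (hf : LaurentIsIntegral F f) (h0 : f.coeff 0 ≠ 0) :
    LaurentIsIntegral F f⁻¹ ∧ f⁻¹.coeff 0 ≠ 0 := by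
  obtain ⟨p, rfl⟩ := (zz_int_iff F f).1 hf
  rw [zz_coeff0] at h0
  have h1 : HahnSeries.ofPowerSeries ℤ F p * HahnSeries.ofPowerSeries ℤ F p⁻¹ = 1 := by
    rw [← map_mul, PowerSeries.mul_inv_cancel _ h0, map_one]
  rw [inv_eq_of_mul_eq_one_right h1]
  refine ⟨(zz_int_iff F _).2 ⟨_, rfl⟩, ?_⟩
  rw [zz_coeff0, PowerSeries.constantCoeff_inv]
  exact inv_ne_zero h0

theorem zz_t (F : Type) [Field F] (a : ℤ) :
    (tparam F) ^ a = HahnSeries.single a (1 : F) :=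
  (RatFunc.single_zpow a).symm

theorem zz_t_ne (F : Type) [Field F] (a : ℤ) : (tparam F) ^ a ≠ 0 := by
  rw [zz_t]
  simp

theorem zz_coeff_t (F : Type) [Field F] (f : LaurentSeries F) (a m : ℤ) :
    (f * (tparam F) ^ a).coeff m = f.coeff (m - a) := by
  rw [zz_t, HahnSeries.coeff_mul_single, mul_one]

theorem zz_decomp (F : Type) [Field F] (f : LaurentSeries F) (a : ℤ)
    (h : ∀ m < a, f.coeff m = 0) :
    ∃ u, f = u * (tparam F) ^ a ∧ LaurentIsIntegral F u ∧ u.coeff 0 = f.coeff a := by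
  refine ⟨f * (tparam F) ^ (-a), ?_, ?_, ?_⟩
  · rw [mul_assoc, ← zpow_add₀ (by simpa using zz_t_ne F 1)]
    simp
  · intro m hm
    rw [zz_coeff_t]
    apply h
    omega
  · rw [zz_coeff_t]
    congr 1
    omega

theorem zz_div (F : Type) [Field F] (f h : LaurentSeries F) (hf : f ≠ 0)
    (hh : ∀ m < f.order, h.coeff m = 0) :
    LaurentIsIntegral F (h / f) ∧ (h.coeff f.order = 0 → (h / f).coeff 0 = 0) := by
  obtain ⟨u, hu, hui, hu0⟩ := zz_decomp F f f.order
    (fun m hm => HahnSeries.coeff_eq_zero_of_lt_order hm)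
  obtain ⟨w, hw, hwi, hw0⟩ := zz_decomp F h f.order hh
  have hu1 : u.coeff 0 ≠ 0 := by
    rw [hu0]
    exact HahnSeries.coeff_order_eq_zero.not.2 hf
  have key : h / f = w * u⁻¹ := by
    have := zz_t_ne F f.order
    generalize f.order = b at *
    rw [hu, hw, mul_div_mul_right _ _ this, div_eq_mul_inv]
  obtain ⟨h1, h2⟩ := zz_int_inv F hui hu1
  obtain ⟨h3, h4⟩ := zz_int_mul F hwi h1
  rw [key]
  refine ⟨h3, fun hz => ?_⟩
  rw [h4, hw0, hz, zero_mul]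

theorem zz_unit_zpow (F : Type) [Field F] (u : LaurentSeries F) (a : ℤ)
    (_ : LaurentIsIntegral F u) (hu0 : u.coeff 0 ≠ 0)
    (hi : LaurentIsIntegral F (u * (tparam F) ^ a)) : 0 ≤ a := by
  by_contra hlt
  have := hi a (by omega)
  rw [zz_coeff_t, sub_self] at this
  exact hu0 this

theorem zz_unit_prod (F : Type) [Field F] {ι : Type} (s : Finset ι) (u : ι → LaurentSeries F)
    (h : ∀ i ∈ s, LaurentIsIntegral F (u i) ∧ (u i).coeff 0 ≠ 0) :
    LaurentIsIntegral F (∏ i ∈ s, u i) ∧ (∏ i ∈ s, u i).coeff 0 ≠ 0 := by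
  classical
  induction s using Finset.induction_on with
  | empty =>
    simp only [Finset.prod_empty]
    refine ⟨fun m hm => ?_, ?_⟩
    · rw [HahnSeries.coeff_one, if_neg (by omega)]
    · simp
  | insert a s ha ih =>
    rw [Finset.prod_insert ha]
    obtain ⟨h1, h2⟩ := h a (Finset.mem_insert_self _ _)
    obtain ⟨h3, h4⟩ := ih fun i hi => h i (Finset.mem_insert_of_mem hi)
    obtain ⟨h5, h6⟩ := zz_int_mul F h1 h3
    refine ⟨h5, ?_⟩
    rw [h6]
    exact mul_ne_zero h2 h4

theorem zz_one (F : Type) [Field F] :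
    LaurentIsIntegral F 1 ∧ (1 : LaurentSeries F).coeff 0 = 1 := by
  refine ⟨fun m hm => ?_, ?_⟩
  · rw [HahnSeries.coeff_one, if_neg (by omega)]
  · simp

theorem zz_iw_mul (F : Type) [Field F] (n : ℕ)
    {g h : Matrix.SpecialLinearGroup (Fin n) (LaurentSeries F)}
    (hg : g ∈ Iwahori F n) (hh : h ∈ Iwahori F n) : g * h ∈ Iwahori F n := by
  obtain ⟨g1, g2⟩ := hg
  obtain ⟨h1, h2⟩ := hh
  refine ⟨fun i j => ?_, fun i j hij => ?_⟩
  · rw [Matrix.SpecialLinearGroup.coe_mul, Matrix.mul_apply]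
    exact zz_int_sum F _ _ fun k _ => (zz_int_mul F (g1 i k) (h1 k j)).1
  · rw [Matrix.SpecialLinearGroup.coe_mul, Matrix.mul_apply, HahnSeries.coeff_sum]
    refine Finset.sum_eq_zero fun k _ => ?_
    rw [(zz_int_mul F (g1 i k) (h1 k j)).2]
    rcases lt_or_ge k i with hk | hk
    · rw [g2 i k hk, zero_mul]
    · rw [h2 k j (lt_of_lt_of_le hij hk), mul_zero]

theorem zz_tri_diag {R : Type} [CommRing R] (n : ℕ) (A B : Matrix (Fin n) (Fin n) R)
    (hA : ∀ i j : Fin n, j < i → A i j = 0) (hB : ∀ i j : Fin n, j < i → B i j = 0) :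
    (∀ i j : Fin n, j < i → (A * B) i j = 0) ∧ ∀ i, (A * B) i i = A i i * B i i := by
  refine ⟨fun i j hij => ?_, fun i => ?_⟩
  · rw [Matrix.mul_apply]
    refine Finset.sum_eq_zero fun k _ => ?_
    rcases lt_or_ge k i with hk | hk
    · rw [hA i k hk, zero_mul]
    · rw [hB k j (lt_of_lt_of_le hij hk), mul_zero]
  · rw [Matrix.mul_apply, Finset.sum_eq_single i]
    · intro k _ hk
      rcases lt_or_gt_of_ne hk with hk | hk
      · rw [hA i k hk, zero_mul]
      · rw [hB k i hk, mul_zero]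
    · simp

theorem zz_bo_mul (F : Type) [Field F] (n : ℕ)
    {g h : Matrix.SpecialLinearGroup (Fin n) (LaurentSeries F)}
    (hg : g ∈ ConnBorel F n) (hh : h ∈ ConnBorel F n) : g * h ∈ ConnBorel F n := by
  obtain ⟨g1, g2⟩ := hg
  obtain ⟨h1, h2⟩ := hh
  obtain ⟨k1, k2⟩ := zz_tri_diag n _ _ g1 h1
  refine ⟨fun i j hij => ?_, fun i => ?_⟩
  · rw [Matrix.SpecialLinearGroup.coe_mul, k1 i j hij]
  · rw [Matrix.SpecialLinearGroup.coe_mul, k2 i]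
    obtain ⟨h5, h6⟩ := zz_int_mul F (g2 i).1 (h2 i).1
    refine ⟨h5, ?_⟩
    rw [h6]
    exact mul_ne_zero (g2 i).2 (h2 i).2

theorem zz_tri_adj {R : Type} [Field R] (n : ℕ) (A : Matrix (Fin n) (Fin n) R)
    (hA : ∀ i j : Fin n, j < i → A i j = 0) (hd : A.det = 1) :
    ∀ i j : Fin n, j < i → A.adjugate i j = 0 := by
  have hinv : A⁻¹ = A.adjugate := by
    rw [Matrix.inv_def, hd]
    simp
  rw [← hinv]
  have hu : IsUnit A := (Matrix.isUnit_iff_isUnit_det A).2 (by rw [hd]; exact isUnit_one)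
  have : Invertible A := hu.invertible
  have ht : A.BlockTriangular id := fun i j hij => hA i j hij
  have := Matrix.blockTriangular_inv_of_blockTriangular ht
  intro i j hij
  exact this hij

theorem zz_bo_inv (F : Type) [Field F] (n : ℕ)
    {g : Matrix.SpecialLinearGroup (Fin n) (LaurentSeries F)}
    (hg : g ∈ ConnBorel F n) : g⁻¹ ∈ ConnBorel F n := by
  obtain ⟨g1, g2⟩ := hg
  have h1 := zz_tri_adj n _ g1 g.2
  rw [← Matrix.SpecialLinearGroup.coe_inv] at h1
  refine ⟨h1, fun i => ?_⟩
  have h2 := (zz_tri_diag n _ _ g1 h1).2 i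
  rw [← Matrix.SpecialLinearGroup.coe_mul, mul_inv_cancel, Matrix.SpecialLinearGroup.coe_one,
    Matrix.one_apply_eq] at h2
  rw [← inv_eq_of_mul_eq_one_right h2.symm]
  exact zz_int_inv F (g2 i).1 (g2 i).2

theorem zz_iw_inv (F : Type) [Field F] (n : ℕ)
    {g : Matrix.SpecialLinearGroup (Fin n) (LaurentSeries F)}
    (hg : g ∈ Iwahori F n) : g⁻¹ ∈ Iwahori F n := by
  obtain ⟨g1, g2⟩ := hg
  have h1 : ∀ i j, ∃ p : PowerSeries F, HahnSeries.ofPowerSeries ℤ F p =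
      (g : Matrix (Fin n) (Fin n) (LaurentSeries F)) i j := fun i j => (zz_int_iff F _).1 (g1 i j)
  choose P hP using h1
  have hm : (g : Matrix (Fin n) (Fin n) (LaurentSeries F)) =
      (HahnSeries.ofPowerSeries ℤ F).mapMatrix (Matrix.of P) := by
    ext i j : 2
    simp [hP]
  have hdet : (Matrix.of P).det = 1 := by
    apply HahnSeries.ofPowerSeries_injective (Γ := ℤ)
    rw [RingHom.map_det, ← hm, map_one]
    exact g.2
  have hinv : ((g⁻¹ : Matrix.SpecialLinearGroup (Fin n) (LaurentSeries F)) :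
      Matrix (Fin n) (Fin n) (LaurentSeries F)) =
      (HahnSeries.ofPowerSeries ℤ F).mapMatrix (Matrix.of P).adjugate := by
    rw [Matrix.SpecialLinearGroup.coe_inv, hm, RingHom.map_adjugate]
  have h3 : ∀ i j, ((g⁻¹ : Matrix.SpecialLinearGroup (Fin n) (LaurentSeries F)) :
      Matrix (Fin n) (Fin n) (LaurentSeries F)) i j =
      HahnSeries.ofPowerSeries ℤ F ((Matrix.of P).adjugate i j) := fun i j => by
    rw [hinv]; rfl
  have h4 := zz_tri_adj n ((PowerSeries.constantCoeff (R := F)).mapMatrix (Matrix.of P))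
    (fun i j hij => by
      have := g2 i j hij
      rw [← hP, zz_coeff0] at this
      simpa using this) (by rw [← RingHom.map_det, hdet, map_one])
  refine ⟨fun i j => ?_, fun i j hij => ?_⟩
  · rw [h3]
    exact (zz_int_iff F _).2 ⟨_, rfl⟩
  · rw [h3, zz_coeff0]
    have := h4 i j hij
    rw [← RingHom.map_adjugate] at this
    simpa using this

theorem zz_sign (F : Type) [Field F] {e : LaurentSeries F} (h : e = 1 ∨ e = -1) :
    LaurentIsIntegral F e ∧ e.coeff 0 ≠ 0 := by
  rcases h with rfl | rfl
  · exact ⟨(zz_one F).1, by simp⟩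
  · refine ⟨fun m hm => ?_, by simp⟩
    rw [HahnSeries.coeff_neg, (zz_one F).1 m hm, neg_zero]

theorem zz_uniq (F : Type) [Field F] (n : ℕ) (σ σ' : Equiv.Perm (Fin n)) (a a' : Fin n → ℤ)
    (ha : (∑ k, a k) = 0) (ha' : (∑ k, a' k) = 0)
    (m m' : Matrix.SpecialLinearGroup (Fin n) (LaurentSeries F))
    (hm : IsAffineLifting F n σ a m) (hm' : IsAffineLifting F n σ' a' m')
    (d : Matrix.SpecialLinearGroup (Fin n) (LaurentSeries F)) (hd : d ∈ ConnBorel F n)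
    (i : Matrix.SpecialLinearGroup (Fin n) (LaurentSeries F)) (hi : i ∈ Iwahori F n)
    (h : d * m = m' * i) : σ = σ' ∧ a = a' := by
  obtain ⟨ε, hε, hm⟩ := hm
  obtain ⟨ε', hε', hm'⟩ := hm'
  obtain ⟨d1, d2⟩ := hd
  obtain ⟨i1, i2⟩ := hi
  set τ : Equiv.Perm (Fin n) := σ.trans σ'.symm with hτ
  have hτσ : ∀ k, σ' (τ k) = σ k := fun k => by simp [hτ]
  have e1 : ∀ k, d.1 (σ k) (σ k) * (ε k * tparam F ^ a k) =
      ε' (τ k) * tparam F ^ a' (τ k) * i.1 (τ k) k := by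
    intro k
    have h1 : (d * m).1 (σ k) k = (m' * i).1 (σ k) k := by rw [h]
    rw [Matrix.SpecialLinearGroup.coe_mul, Matrix.SpecialLinearGroup.coe_mul, Matrix.mul_apply,
      Matrix.mul_apply] at h1
    simp only [hm, hm'] at h1
    rw [Finset.sum_eq_single (σ k), Finset.sum_eq_single (τ k)] at h1
    · simpa [hτσ] using h1
    · intro b _ hb
      rw [if_neg, zero_mul]
      intro hc
      apply hb
      rw [hτ]
      simp [hc]
    · simp
    · intro b _ hb
      rw [if_neg hb, mul_zero]
    · simp
  have t0 : tparam F ≠ 0 := by simpa using zz_t_ne F 1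
  have e2 : ∀ k, ∃ u, LaurentIsIntegral F u ∧ u.coeff 0 ≠ 0 ∧
      i.1 (τ k) k = u * tparam F ^ (a k - a' (τ k)) := by
    intro k
    obtain ⟨p1, p2⟩ := zz_sign F (hε k)
    obtain ⟨q1, q2⟩ := zz_sign F (hε' (τ k))
    obtain ⟨q3, q4⟩ := zz_int_inv F q1 q2
    obtain ⟨r1, r2⟩ := zz_int_mul F (d2 (σ k)).1 p1
    obtain ⟨r3, r4⟩ := zz_int_mul F r1 q3
    refine ⟨_, r3, ?_, ?_⟩
    · rw [r4, r2]
      exact mul_ne_zero (mul_ne_zero (d2 (σ k)).2 p2) q4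
    · have hne : ε' (τ k) ≠ 0 := by
        intro h0
        rw [h0] at q2
        simp at q2
      rw [zpow_sub₀ t0]
      have := zz_t_ne F (a' (τ k))
      have e1k := e1 k
      change d.1 (σ k) (σ k) * (ε k * tparam F ^ a k) = _ at e1k
      field_simp
      linear_combination -e1k
  have hge : ∀ k, a' (τ k) ≤ a k := by
    intro k
    obtain ⟨u, hu, hu0, he⟩ := e2 k
    have := zz_unit_zpow F u (a k - a' (τ k)) hu hu0 (he ▸ i1 (τ k) k)
    omega
  have hsum : ∑ k, a' (τ k) = ∑ k, a k := by
    rw [Equiv.sum_comp τ a', ha, ha']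
  have heq : ∀ k, a' (τ k) = a k := fun k =>
    (Finset.sum_eq_sum_iff_of_le fun k _ => hge k).1 hsum k (Finset.mem_univ k)
  have hle : ∀ k, τ k ≤ k := by
    intro k
    by_contra hlt
    obtain ⟨u, hu, hu0, he⟩ := e2 k
    rw [heq k, sub_self, zpow_zero, mul_one] at he
    have := i2 (τ k) k (not_le.1 hlt)
    rw [show (i : Matrix (Fin n) (Fin n) (LaurentSeries F)) (τ k) k = u from he] at this
    exact hu0 this
  have hval : ∀ k, τ k = k := by
    have hs : ∑ k : Fin n, (τ k).val = ∑ k : Fin n, k.val :=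
      Equiv.sum_comp τ (fun k : Fin n => k.val)
    intro k
    exact Fin.ext ((Finset.sum_eq_sum_iff_of_le (s := Finset.univ)
      (f := fun k : Fin n => (τ k).val) (g := fun k : Fin n => k.val) (fun k _ => hle k)).1 hs k (Finset.mem_univ k))
  constructor
  · ext k : 1
    rw [← hτσ k, hval k]
  · ext k
    rw [← heq k, hval k]

open Matrix in
def zz_T {K : Type} [Field K] (n : ℕ) (u v : Fin n → K) (h : v ⬝ᵥ u = 0) :
    Matrix.SpecialLinearGroup (Fin n) K :=
  ⟨1 + Matrix.vecMulVec u v, by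
    have := Matrix.det_one_add_replicateCol_mul_replicateRow (ι := Unit) u v
    rw [h, add_zero, ← Matrix.vecMulVec_eq] at this
    exact this⟩

open Matrix in
theorem zz_T_mul {K : Type} [Field K] (n : ℕ) (u v : Fin n → K) (h : v ⬝ᵥ u = 0)
    (h' : v ⬝ᵥ (-u) = 0) : zz_T n u v h * zz_T n (-u) v h' = 1 := by
  apply Subtype.ext
  rw [Matrix.SpecialLinearGroup.coe_mul]
  simp only [zz_T, Matrix.SpecialLinearGroup.coe_one]
  rw [mul_add, mul_one, add_mul, one_mul, Matrix.vecMulVec_mul_vecMulVec, h']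
  ext i j
  simp [Matrix.vecMulVec_apply]

theorem zz_det_mono {R : Type} [CommRing R] (n : ℕ) (σ : Equiv.Perm (Fin n)) (w : Fin n → R) :
    (Matrix.of fun i k => if i = σ k then w k else 0).det =
      ((Equiv.Perm.sign σ : ℤ) : R) * ∏ k, w k := by
  have : (Matrix.of fun i k => if i = σ k then w k else 0) =
      (Matrix.diagonal w).submatrix σ.symm id := by
    ext i k
    simp only [Matrix.of_apply, Matrix.submatrix_apply, id, Matrix.diagonal_apply]
    by_cases h : i = σ k
    · simp [h]
    · rw [if_neg h, if_neg]
      intro hc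
      exact h (by rw [← hc]; simp)
  rw [this, Matrix.det_permute, Matrix.det_diagonal, Equiv.Perm.sign_symm]

def zz_Q {K : Type} [Field K] (n s : ℕ) (g : Matrix (Fin n) (Fin n) K) (c : Fin n → Fin n) : Prop :=
  ∀ r : Fin n, n ≤ r + s → g r (c r) ≠ 0 ∧ (∀ k, k ≠ c r → g r k = 0) ∧
    (∀ i, i ≠ r → g i (c r) = 0)

open Matrix in
theorem zz_step (F : Type) [Field F] (n s : ℕ) (hs : s < n)
    (g : Matrix.SpecialLinearGroup (Fin n) (LaurentSeries F)) (c : Fin n → Fin n)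
    (hQ : zz_Q n s g.1 c) :
    ∃ g' : Matrix.SpecialLinearGroup (Fin n) (LaurentSeries F), ∃ c', zz_Q n (s + 1) g'.1 c' ∧
      ∃ d ∈ ConnBorel F n, ∃ i ∈ Iwahori F n, g = d * g' * i := by
  obtain ⟨r, hr⟩ : ∃ r : Fin n, (r : ℕ) + s + 1 = n := ⟨⟨n - s - 1, by omega⟩, by simp; omega⟩
  have hne : ∃ k, g.1 r k ≠ 0 := by
    by_contra hcon
    push Not at hcon
    have h1 := Matrix.det_eq_zero_of_row_eq_zero r hcon
    rw [g.2] at h1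
    exact one_ne_zero h1
  classical
  obtain ⟨j, hj, hmin⟩ := Finset.exists_min_image (Finset.univ.filter fun k => g.1 r k ≠ 0)
    (fun k => toLex ((g.1 r k).order, k)) (by
      obtain ⟨k, hk⟩ := hne
      exact ⟨k, by simpa using hk⟩)
  have hj0 : g.1 r j ≠ 0 := by simpa using hj
  have hord : ∀ k, g.1 r k ≠ 0 → (g.1 r j).order < (g.1 r k).order ∨
      ((g.1 r j).order = (g.1 r k).order ∧ j ≤ k) := by
    intro k hk
    have := hmin k (by simpa using hk)
    rw [Prod.Lex.toLex_le_toLex] at this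
    exact this
  have hcoef : ∀ k, (∀ m < (g.1 r j).order, (g.1 r k).coeff m = 0) ∧
      (k < j → (g.1 r k).coeff (g.1 r j).order = 0) := by
    intro k
    by_cases hk : g.1 r k = 0
    · rw [hk]
      simp
    · rcases hord k hk with h1 | ⟨h1, h2⟩
      · exact ⟨fun m hm => HahnSeries.coeff_eq_zero_of_lt_order (hm.trans h1),
          fun _ => HahnSeries.coeff_eq_zero_of_lt_order h1⟩
      · exact ⟨fun m hm => HahnSeries.coeff_eq_zero_of_lt_order (h1 ▸ hm),
          fun h3 => absurd h3 (not_lt.2 h2)⟩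
  -- processed rows
  have hpr : ∀ r' : Fin n, r < r' → j ≠ c r' ∧ g.1 r' j = 0 ∧ g.1 r (c r') = 0 := by
    intro r' hr'
    have hlt : (r : ℕ) < r' := hr'
    obtain ⟨q1, q2, q3⟩ := hQ r' (by omega)
    have h3 := q3 r (ne_of_lt hr')
    have h4 : j ≠ c r' := by
      intro h5
      rw [← h5] at h3
      exact hj0 h3
    exact ⟨h4, q2 j h4, h3⟩
  set x : Fin n → LaurentSeries F := fun k => if k = j then 0 else g.1 r k / g.1 r j with hx
  set y : Fin n → LaurentSeries F := fun i => if i = r then 0 else g.1 i j / g.1 r j with hy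
  have hxj : x j = 0 := by simp [hx]
  have hyr : y r = 0 := by simp [hy]
  have hxe : x ⬝ᵥ Pi.single j 1 = 0 := by simp [hxj]
  have hxe' : x ⬝ᵥ (-Pi.single j 1) = 0 := by simp [hxj]
  have hye : (Pi.single r 1 : Fin n → LaurentSeries F) ⬝ᵥ y = 0 := by simp [hyr]
  have hye' : (Pi.single r 1 : Fin n → LaurentSeries F) ⬝ᵥ (-y) = 0 := by simp [hyr]
  set A := zz_T n y (Pi.single r 1) hye with hA
  set A' := zz_T n (-y) (Pi.single r 1) hye' with hA'
  set B := zz_T n (Pi.single j 1) x hxe with hB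
  set B' := zz_T n (-Pi.single j 1) x hxe' with hB'
  have hAA : A * A' = 1 := zz_T_mul n _ _ _ _
  have hBB : B' * B = 1 := by
    rw [mul_eq_one_comm]
    exact zz_T_mul n _ _ _ _
  have hent : ∀ i k, (A' * (g * B')).1 i k =
      (g.1 i k - g.1 i j * x k) - y i * (g.1 r k - g.1 r j * x k) := by
    have hgB : ∀ i k, (g * B').1 i k = g.1 i k - g.1 i j * x k := by
      intro i k
      rw [Matrix.SpecialLinearGroup.coe_mul, hB']
      simp only [zz_T]
      rw [mul_add, mul_one, Matrix.mul_vecMulVec, Matrix.add_apply, Matrix.vecMulVec_apply,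
        Matrix.mulVec_neg, Matrix.mulVec_single_one]
      simp [sub_eq_add_neg]
    intro i k
    rw [Matrix.SpecialLinearGroup.coe_mul, hA']
    simp only [zz_T]
    rw [add_mul, one_mul, Matrix.vecMulVec_mul, Matrix.add_apply, Matrix.vecMulVec_apply,
      Matrix.single_one_vecMul]
    change (g * B').1 i k + (-y) i * (g * B').1 r k = _
    rw [hgB, hgB, Pi.neg_apply]
    ring
  have hk1 : ∀ i k, k ≠ j → (A' * (g * B')).1 i k = g.1 i k - g.1 i j * x k := by
    intro i k hk
    rw [hent]
    have : g.1 r k - g.1 r j * x k = 0 := by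
      simp only [hx, if_neg hk]
      field_simp
      ring
    rw [this, mul_zero, sub_zero]
  have hk2 : ∀ i, (A' * (g * B')).1 i j = g.1 i j - y i * g.1 r j := by
    intro i
    rw [hent, hxj]
    ring
  refine ⟨A' * (g * B'), Function.update c r j, ?_, A, ?_, B, ?_, ?_⟩
  · intro r' hr'
    by_cases h : r' = r
    · subst h
      rw [Function.update_self]
      refine ⟨?_, fun k hk => ?_, fun i hi => ?_⟩
      · rw [hk2, hyr, zero_mul, sub_zero]
        exact hj0
      · rw [hk1 _ _ hk]
        simp only [hx, if_neg hk]
        field_simp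
        ring
      · rw [hk2]
        simp only [hy, if_neg hi]
        field_simp
        ring
    · have hlt : r < r' := by
        have : (r : ℕ) ≠ r' := fun hc => h (Fin.ext hc.symm)
        change (r : ℕ) < r'
        omega
      obtain ⟨p1, p2, p3⟩ := hpr r' hlt
      obtain ⟨q1, q2, q3⟩ := hQ r' (by
        have : (r : ℕ) < r' := hlt
        omega)
      rw [Function.update_of_ne h]
      refine ⟨?_, fun k hk => ?_, fun i hi => ?_⟩
      · rw [hk1 _ _ p1.symm, p2, zero_mul, sub_zero]
        exact q1
      · by_cases hkj : k = j
        · subst hkj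
          rw [hk2, p2]
          simp only [hy, if_neg h, p2]
          simp
        · rw [hk1 _ _ hkj, p2, zero_mul, sub_zero, q2 k hk]
      · rw [hk1 _ _ p1.symm, q3 i hi]
        simp only [hx, if_neg p1.symm, p3]
        simp
  · have hAe : ∀ i k, A.1 i k = (1 : Matrix (Fin n) (Fin n) (LaurentSeries F)) i k +
        y i * (Pi.single r 1 : Fin n → LaurentSeries F) k := fun i k => rfl
    refine ⟨fun i k hik => ?_, fun i => ?_⟩
    · change A.1 i k = 0
      rw [hAe, Matrix.one_apply_ne (ne_of_gt hik), zero_add]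
      by_cases hk : k = r
      · subst hk
        simp only [hy, if_neg (ne_of_gt hik), (hpr i hik).2.1]
        simp
      · rw [Pi.single_eq_of_ne hk, mul_zero]
    · have : A.1 i i = 1 := by
        rw [hAe, Matrix.one_apply_eq]
        by_cases hk : i = r
        · rw [hk, hyr]
          simp
        · rw [Pi.single_eq_of_ne hk, mul_zero, add_zero]
      change LaurentIsIntegral F (A.1 i i) ∧ (A.1 i i).coeff 0 ≠ 0
      rw [this]
      exact zz_sign F (Or.inl rfl)
  · have hBe : ∀ i k, B.1 i k = (1 : Matrix (Fin n) (Fin n) (LaurentSeries F)) i k +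
        (Pi.single j 1 : Fin n → LaurentSeries F) i * x k := fun i k => rfl
    have hB1 : ∀ i k, i ≠ k → B.1 i k = if i = j then g.1 r k / g.1 r j else 0 := by
      intro i k hik
      rw [hBe, Matrix.one_apply_ne hik, zero_add]
      split_ifs with h
      · subst h
        simp only [hx, if_neg hik.symm]
        simp
      · rw [Pi.single_eq_of_ne h, zero_mul]
    have hB2 : ∀ i, B.1 i i = 1 := by
      intro i
      rw [hBe, Matrix.one_apply_eq]
      by_cases h : i = j
      · rw [h, hxj]
        simp
      · rw [Pi.single_eq_of_ne h, zero_mul, add_zero]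
    refine ⟨fun i k => ?_, fun i k hik => ?_⟩
    · change LaurentIsIntegral F (B.1 i k)
      by_cases h : i = k
      · rw [← h, hB2]
        exact (zz_one F).1
      · rw [hB1 i k h]
        split_ifs with h2
        · exact (zz_div F _ _ hj0 (hcoef k).1).1
        · intro m hm
          simp
    · change (B.1 i k).coeff 0 = 0
      rw [hB1 i k (ne_of_gt hik)]
      split_ifs with h2
      · exact (zz_div F _ _ hj0 (hcoef k).1).2 ((hcoef k).2 (h2 ▸ hik))
      · simp
  · calc g = (A * A') * g * (B' * B) := by rw [hAA, hBB, one_mul, mul_one]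
      _ = A * (A' * (g * B')) * B := by simp only [mul_assoc]

theorem zz_bo_one (F : Type) [Field F] (n : ℕ) : 1 ∈ ConnBorel F n := by
  refine ⟨fun i j hij => ?_, fun i => ?_⟩
  · rw [Matrix.SpecialLinearGroup.coe_one, Matrix.one_apply_ne (ne_of_gt hij)]
  · rw [Matrix.SpecialLinearGroup.coe_one, Matrix.one_apply_eq]
    exact zz_sign F (Or.inl rfl)

theorem zz_iw_one (F : Type) [Field F] (n : ℕ) : 1 ∈ Iwahori F n := by
  refine ⟨fun i j => ?_, fun i j hij => ?_⟩
  · rw [Matrix.SpecialLinearGroup.coe_one, Matrix.one_apply]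
    split_ifs
    · exact (zz_one F).1
    · intro m hm
      simp
  · rw [Matrix.SpecialLinearGroup.coe_one, Matrix.one_apply_ne (ne_of_gt hij)]
    simp

theorem zz_reduce (F : Type) [Field F] (n : ℕ)
    (g : Matrix.SpecialLinearGroup (Fin n) (LaurentSeries F)) (s : ℕ) (hs : s ≤ n) :
    ∃ g' : Matrix.SpecialLinearGroup (Fin n) (LaurentSeries F), ∃ c', zz_Q n s g'.1 c' ∧
      ∃ d ∈ ConnBorel F n, ∃ i ∈ Iwahori F n, g = d * g' * i := by
  induction s with
  | zero =>
    refine ⟨g, id, fun r hr => ?_, 1, zz_bo_one F n, 1, zz_iw_one F n, by simp⟩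
    have := r.2
    omega
  | succ s ih =>
    obtain ⟨g', c', hQ, d, hd, i, hi, he⟩ := ih (by omega)
    obtain ⟨g2, c2, hQ2, d2, hd2, i2, hi2, he2⟩ := zz_step F n s (by omega) g' c' hQ
    refine ⟨g2, c2, hQ2, d * d2, zz_bo_mul F n hd hd2, i2 * i, zz_iw_mul F n hi2 hi, ?_⟩
    rw [he, he2]
    simp only [mul_assoc]

theorem zz_mono (F : Type) [Field F] (n : ℕ) (hn : 2 ≤ n)
    (g : Matrix.SpecialLinearGroup (Fin n) (LaurentSeries F)) (c : Fin n → Fin n)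
    (hQ : zz_Q n n g.1 c) :
    ∃ (σ : Equiv.Perm (Fin n)) (a : Fin n → ℤ), (∑ k, a k) = 0 ∧
        ∃ m, IsAffineLifting F n σ a m ∧ ∃ d ∈ ConnBorel F n, g = d * m := by
  have hQ' := fun r => hQ r (by omega)
  have hinj : Function.Injective c := by
    intro r r' h
    by_contra hne
    have := (hQ' r).2.2 r' (Ne.symm hne)
    rw [h] at this
    exact (hQ' r').1 this
  set ρ : Equiv.Perm (Fin n) := Equiv.ofBijective c (Finite.injective_iff_bijective.1 hinj) with hρ
  have hρc : ∀ r, ρ r = c r := fun r => rfl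
  set σ := ρ.symm with hσ
  have hcσ : ∀ k, c (σ k) = k := fun k => by
    rw [← hρc, hσ]
    simp
  have hw0 : ∀ k, g.1 (σ k) k ≠ 0 := fun k => by
    have := (hQ' (σ k)).1
    rwa [hcσ] at this
  have hgm : g.1 = Matrix.of fun i k => if i = σ k then g.1 (σ k) k else 0 := by
    refine Matrix.ext fun i k => ?_
    rw [Matrix.of_apply]
    split_ifs with h
    · rw [h]
    · have := (hQ' (σ k)).2.2 i h
      rwa [hcσ] at this
  have hdec : ∀ k, ∃ u, g.1 (σ k) k = u * (tparam F) ^ ((g.1 (σ k) k).order) ∧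
      LaurentIsIntegral F u ∧ u.coeff 0 ≠ 0 := by
    intro k
    obtain ⟨u, h1, h2, h3⟩ := zz_decomp F (g.1 (σ k) k) (g.1 (σ k) k).order
      (fun m hm => HahnSeries.coeff_eq_zero_of_lt_order hm)
    refine ⟨u, h1, h2, ?_⟩
    rw [h3]
    exact HahnSeries.coeff_order_eq_zero.not.2 (hw0 k)
  choose u hu hui hu0 using hdec
  set a : Fin n → ℤ := fun k => (g.1 (σ k) k).order with ha
  have t0 : tparam F ≠ 0 := by simpa using zz_t_ne F 1
  set S : LaurentSeries F := ((Equiv.Perm.sign σ : ℤ) : LaurentSeries F) with hS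
  have hS1 : S = 1 ∨ S = -1 := by
    rcases Int.units_eq_one_or (Equiv.Perm.sign σ) with h | h
    · left
      rw [hS, h]
      simp
    · right
      rw [hS, h]
      simp
  have hSS : S * S = 1 := by
    rcases hS1 with h | h <;> rw [h] <;> simp
  have hprodt : ∏ k, (tparam F) ^ a k = (tparam F) ^ (∑ k, a k) := by
    have : ∀ s : Finset (Fin n), ∏ k ∈ s, (tparam F) ^ a k = (tparam F) ^ (∑ k ∈ s, a k) := by
      intro s
      induction s using Finset.induction_on with
      | empty => simp
      | insert b s hb ih => rw [Finset.prod_insert hb, Finset.sum_insert hb, ih, zpow_add₀ t0]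
    exact this _
  have hdet : S * ((∏ k, u k) * (tparam F) ^ (∑ k, a k)) = 1 := by
    have h1 := g.2
    rw [hgm, zz_det_mono] at h1
    rw [← hprodt, ← Finset.prod_mul_distrib, ← h1]
    congr 1
    exact Finset.prod_congr rfl fun k _ => (hu k).symm
  obtain ⟨hU1, hU2⟩ := zz_unit_prod F Finset.univ u fun k _ => ⟨hui k, hu0 k⟩
  obtain ⟨hs1, hs2⟩ := zz_sign F hS1
  obtain ⟨hU3, hU4⟩ := zz_int_mul F hs1 hU1
  have hU5 : (S * ∏ k, u k).coeff 0 ≠ 0 := by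
    rw [hU4]
    exact mul_ne_zero hs2 hU2
  have hsum : ∑ k, a k = 0 := by
    rw [← mul_assoc] at hdet
    have h1 := zz_unit_zpow F _ (∑ k, a k) hU3 hU5 (by rw [hdet]; exact (zz_one F).1)
    by_contra hne
    have h2 := zz_coeff_t F (S * ∏ k, u k) (∑ k, a k) 0
    rw [hdet, hU3 _ (by omega)] at h2
    simp at h2
  have hUS : ∏ k, u k = S := by
    rw [hsum, zpow_zero, mul_one] at hdet
    calc ∏ k, u k = S * (S * ∏ k, u k) := by rw [← mul_assoc, hSS, one_mul]
      _ = S := by rw [hdet, mul_one]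
  set z : Fin n := ⟨0, by omega⟩
  set ε : Fin n → LaurentSeries F := fun k => if k = z then S else 1 with hε
  have hε1 : ∀ k, ε k = 1 ∨ ε k = -1 := by
    intro k
    simp only [hε]
    split_ifs
    · exact hS1
    · exact Or.inl rfl
  have hεε : ∀ k, ε k * ε k = 1 := by
    intro k
    rcases hε1 k with h | h <;> rw [h] <;> simp
  have hεp : ∏ k, ε k = S := by
    simp [hε]
  have hmdet : (Matrix.of fun i k => if i = σ k then ε k * (tparam F) ^ a k else 0).det = 1 := by
    rw [zz_det_mono, Finset.prod_mul_distrib, hεp, hprodt, hsum, zpow_zero, mul_one]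
    exact hSS
  have hddet : (Matrix.diagonal fun i => u (ρ i) * ε (ρ i)).det = 1 := by
    rw [Matrix.det_diagonal, Equiv.prod_comp ρ (fun k => u k * ε k), Finset.prod_mul_distrib, hεp,
      hUS, hSS]
  refine ⟨σ, a, hsum, ⟨_, hmdet⟩, ⟨ε, hε1, fun i k => rfl⟩, ⟨_, hddet⟩, ⟨?_, ?_⟩, ?_⟩
  · intro i j hij
    exact Matrix.diagonal_apply_ne _ (ne_of_gt hij)
  · intro i
    change LaurentIsIntegral F ((Matrix.diagonal fun i => u (ρ i) * ε (ρ i)) i i) ∧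
      ((Matrix.diagonal fun i => u (ρ i) * ε (ρ i)) i i).coeff 0 ≠ 0
    rw [Matrix.diagonal_apply_eq]
    obtain ⟨e1, e2⟩ := zz_sign F (hε1 (ρ i))
    obtain ⟨f1, f2⟩ := zz_int_mul F (hui (ρ i)) e1
    refine ⟨f1, ?_⟩
    rw [f2]
    exact mul_ne_zero (hu0 _) e2
  · apply Subtype.ext
    change g.1 = (Matrix.diagonal fun i => u (ρ i) * ε (ρ i)) *
      (Matrix.of fun i k => if i = σ k then ε k * (tparam F) ^ a k else 0)
    refine hgm.trans ?_
    refine Matrix.ext fun i k => ?_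
    rw [Matrix.diagonal_mul, Matrix.of_apply, Matrix.of_apply]
    split_ifs with h
    · have h1 : ρ i = k := by
        rw [h, hσ]
        simp
      rw [h1]
      calc g.1 (σ k) k = u k * tparam F ^ a k := hu k
        _ = u k * (ε k * ε k) * tparam F ^ a k := by rw [hεε, mul_one]
        _ = _ := by ring
    · rw [mul_zero]

theorem iwasawa_bruhat_decomposition (F : Type) [Field F] (n : ℕ) (hn : 2 ≤ n) :
    (∀ g : Matrix.SpecialLinearGroup (Fin n) (LaurentSeries F),
      ∃ (σ : Equiv.Perm (Fin n)) (a : Fin n → ℤ), (∑ k, a k) = 0 ∧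
        ∃ m, IsAffineLifting F n σ a m ∧
          ∃ d ∈ ConnBorel F n, ∃ d' ∈ Iwahori F n, g = d * m * d') ∧
    (∀ (σ σ' : Equiv.Perm (Fin n)) (a a' : Fin n → ℤ),
      (∑ k, a k) = 0 → (∑ k, a' k) = 0 →
      ∀ m m', IsAffineLifting F n σ a m → IsAffineLifting F n σ' a' m' →
        (∃ g, (∃ d ∈ ConnBorel F n, ∃ d' ∈ Iwahori F n, g = d * m * d') ∧
              (∃ d ∈ ConnBorel F n, ∃ d' ∈ Iwahori F n, g = d * m' * d')) →
        σ = σ' ∧ a = a') := by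
  refine ⟨fun g => ?_, ?_⟩
  · obtain ⟨g', c, hQ, d, hd, i, hi, he⟩ := zz_reduce F n g n le_rfl
    obtain ⟨σ, a, ha, m, hm, d2, hd2, he2⟩ := zz_mono F n hn g' c hQ
    refine ⟨σ, a, ha, m, hm, d * d2, zz_bo_mul F n hd hd2, i, hi, ?_⟩
    rw [he, he2]
    simp only [mul_assoc]
  · rintro σ σ' a a' ha ha' m m' hm hm' ⟨g, ⟨d, hd, i, hi, h1⟩, ⟨d', hd', i', hi', h2⟩⟩
    refine zz_uniq F n σ σ' a a' ha ha' m m' hm hm' (d'⁻¹ * d)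
      (zz_bo_mul F n (zz_bo_inv F n hd') hd) (i' * i⁻¹) (zz_iw_mul F n hi' (zz_iw_inv F n hi)) ?_
    have h3 : d * m * i = d' * m' * i' := h1.symm.trans h2
    calc d'⁻¹ * d * m = d'⁻¹ * (d * m * i) * i⁻¹ := by group
      _ = m' * (i' * i⁻¹) := by rw [h3]; group
end
end

section
/- Every g ∈ SL_n(F((t))) can be written as g = b·k where b ∈ SL_n(F((t))) is upper triangular and k ∈ SL_n(F[[t]]); that is, SL_n(F((t))) = B(F((t)))·SL_n(F[[t]]) (Iwasawa decomposition). -/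
noncomputable section

lemma iw_op {R K : Type} [CommRing R] [CommRing K] (φ : R →+* K)
    (h : ∀ x y : K, (∃ c, x = φ c * y) ∨ ∃ c, y = φ c * x) (n : ℕ)
    (M : Matrix (Fin n) (Fin n) K) (i j : Fin n) (hij : j ≠ i) :
    ∃ k : Matrix (Fin n) (Fin n) R, k.det = 1 ∧ (M * φ.mapMatrix k) i j = 0 ∧
      (∀ a b, b ≠ i → b ≠ j → (M * φ.mapMatrix k) a b = M a b) ∧
      (∀ a, M a i = 0 → M a j = 0 → (M * φ.mapMatrix k) a i = 0 ∧ (M * φ.mapMatrix k) a j = 0) := by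
  have ht : ∀ (a b : Fin n) (c : R), φ.mapMatrix (Matrix.transvection a b c)
      = Matrix.transvection a b (φ c) := by
    intro a b c
    simp [Matrix.transvection, Matrix.map_add, Matrix.map_single]
  rcases h (M i j) (M i i) with ⟨c, hc⟩ | ⟨c, hc⟩
  · refine ⟨Matrix.transvection i j (-c), Matrix.det_transvection_of_ne _ _ hij.symm _, ?_, ?_, ?_⟩
    · rw [ht]; simp [hc]
    · intro a b hbi hbj
      rw [ht, Matrix.mul_transvection_apply_of_ne _ _ _ _ hbj]
    · intro a h1 h2
      rw [ht, Matrix.mul_transvection_apply_of_ne _ _ _ _ hij.symm]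
      simp [h1, h2]
  · refine ⟨Matrix.transvection j i (1 - c) * Matrix.transvection i j (-1), ?_, ?_, ?_, ?_⟩
    · rw [Matrix.det_mul, Matrix.det_transvection_of_ne _ _ hij.symm,
        Matrix.det_transvection_of_ne _ _ hij, one_mul]
    · rw [map_mul, ht, ht, ← mul_assoc, Matrix.mul_transvection_apply_same,
        Matrix.mul_transvection_apply_same, Matrix.mul_transvection_apply_of_ne _ _ _ _ hij, hc]
      simp; ring
    · intro a b hbi hbj
      rw [map_mul, ht, ht, ← mul_assoc, Matrix.mul_transvection_apply_of_ne _ _ _ _ hbj,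
        Matrix.mul_transvection_apply_of_ne _ _ _ _ hbi]
    · intro a h1 h2
      rw [map_mul, ht, ht, ← mul_assoc, Matrix.mul_transvection_apply_of_ne _ _ _ _ hij.symm,
        Matrix.mul_transvection_apply_same,
        Matrix.mul_transvection_apply_same, Matrix.mul_transvection_apply_of_ne _ _ _ _ hij]
      simp [h1, h2]

lemma iw_row {R K : Type} [CommRing R] [CommRing K] (φ : R →+* K)
    (h : ∀ x y : K, (∃ c, x = φ c * y) ∨ ∃ c, y = φ c * x) (n : ℕ)
    (M : Matrix (Fin n) (Fin n) K) (i : Fin n)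
    (hM : ∀ a b, i < a → b < a → M a b = 0) (m : ℕ) (hm : m ≤ i) :
    ∃ k : Matrix (Fin n) (Fin n) R, k.det = 1 ∧
      (∀ a b, i < a → b < a → (M * φ.mapMatrix k) a b = 0) ∧
      (∀ b : Fin n, b < m → (M * φ.mapMatrix k) i b = 0) := by
  induction m with
  | zero => exact ⟨1, by simp, by simpa using hM, by simp⟩
  | succ m ih =>
    obtain ⟨k, hk, h1, h2⟩ := ih (by omega)
    have hmn : m < n := by omega
    have hji : (⟨m, hmn⟩ : Fin n) < i := by rw [Fin.lt_def]; simp; omega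
    obtain ⟨l, hl, g1, g2, g3⟩ := iw_op φ h n (M * φ.mapMatrix k) i ⟨m, hmn⟩ hji.ne
    refine ⟨k * l, by simp [hk, hl], ?_, ?_⟩
    · intro a b ha hb
      rw [map_mul, ← mul_assoc]
      have := g3 a (h1 a i ha ha) (h1 a _ ha (hji.trans ha))
      by_cases hbi : b = i
      · rw [hbi]; exact this.1
      by_cases hbj : b = ⟨m, hmn⟩
      · rw [hbj]; exact this.2
      rw [g2 a b hbi hbj]; exact h1 a b ha hb
    · intro b hb
      rw [map_mul, ← mul_assoc]
      by_cases hbj : b = ⟨m, hmn⟩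
      · rw [hbj]; exact g1
      have hbm : (b : ℕ) ≠ m := fun e => hbj (Fin.ext e)
      rw [g2 i b (by rintro rfl; omega) hbj]; exact h2 b (by omega)

lemma iw_all {R K : Type} [CommRing R] [CommRing K] (φ : R →+* K)
    (h : ∀ x y : K, (∃ c, x = φ c * y) ∨ ∃ c, y = φ c * x) (n : ℕ)
    (M : Matrix (Fin n) (Fin n) K) (m : ℕ) (hm : m ≤ n) :
    ∃ k : Matrix (Fin n) (Fin n) R, k.det = 1 ∧
      (∀ a b : Fin n, n - m ≤ a → b < a → (M * φ.mapMatrix k) a b = 0) := by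
  induction m with
  | zero => exact ⟨1, by simp, by intro a b; omega⟩
  | succ m ih =>
    obtain ⟨k, hk, h1⟩ := ih (by omega)
    obtain ⟨l, hl, g1, g2⟩ := iw_row φ h n (M * φ.mapMatrix k) ⟨n - (m + 1), by omega⟩
      (fun a b ha hb => h1 a b (by rw [Fin.lt_def] at ha; simp at ha; omega) hb)
      (n - (m + 1)) le_rfl
    refine ⟨k * l, by simp [hk, hl], ?_⟩
    intro a b ha hb
    rw [map_mul, ← mul_assoc]
    by_cases e : a = ⟨n - (m + 1), by omega⟩
    · rw [e]; refine g2 b ?_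
      rw [e, Fin.lt_def] at hb; exact hb
    · refine g1 a b ?_ hb
      have : (a : ℕ) ≠ n - (m + 1) := fun e' => e (Fin.ext e')
      rw [Fin.lt_def]; simp; omega

lemma iw_val (F : Type) [Field F] (x y : LaurentSeries F) :
    (∃ c, x = algebraMap (PowerSeries F) (LaurentSeries F) c * y) ∨
      ∃ c, y = algebraMap (PowerSeries F) (LaurentSeries F) c * x := by
  by_cases hy : y = 0
  · exact Or.inr ⟨0, by simp [hy]⟩
  by_cases hx : x = 0
  · exact Or.inl ⟨0, by simp [hx]⟩
  rcases ValuationRing.isInteger_or_isInteger (PowerSeries F) (x / y) with ⟨c, hc⟩ | ⟨c, hc⟩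
  · left; exact ⟨c, by rw [hc]; field_simp⟩
  · right; exact ⟨c, by rw [hc]; field_simp⟩

lemma iw_int (F : Type) [Field F] (c : PowerSeries F) :
    LaurentIsIntegral F (algebraMap (PowerSeries F) (LaurentSeries F) c) := by
  intro m hm
  rw [LaurentSeries.coe_algebraMap]
  rw [HahnSeries.ofPowerSeries_apply]
  apply HahnSeries.embDomain_notin_range
  rintro ⟨a, rfl⟩
  simp at hm
  omega

theorem iwasawa_decomposition (F : Type) [Field F] (n : ℕ) (hn : 2 ≤ n)
    (g : Matrix.SpecialLinearGroup (Fin n) (LaurentSeries F)) :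
    ∃ b k : Matrix.SpecialLinearGroup (Fin n) (LaurentSeries F),
      (∀ i j : Fin n, j < i → (b : Matrix (Fin n) (Fin n) (LaurentSeries F)) i j = 0) ∧
      (∀ i j : Fin n, LaurentIsIntegral F ((k : Matrix (Fin n) (Fin n) (LaurentSeries F)) i j)) ∧
      g = b * k := by
  obtain ⟨k, hk, h⟩ := iw_all (algebraMap (PowerSeries F) (LaurentSeries F)) (iw_val F) n
    (g : Matrix (Fin n) (Fin n) (LaurentSeries F)) n le_rfl
  let k' : Matrix.SpecialLinearGroup (Fin n) (PowerSeries F) := ⟨k, hk⟩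
  let f := Matrix.SpecialLinearGroup.map (n := Fin n) (algebraMap (PowerSeries F) (LaurentSeries F))
  refine ⟨g * f k', f k'⁻¹, ?_, ?_, ?_⟩
  · intro i j hij
    exact h i j (by omega) hij
  · intro i j
    exact iw_int F _
  · rw [mul_assoc, ← map_mul]; simp
end
end

section
/- For every g ∈ SL_n(k) there exists a unique permutation σ ∈ S_n such that g ∈ B(k)·m·B(k) for some monomial matrix m ∈ SL_n(k) whose nonzero entries are exactly at the positions (σ(j), j), j = 1,…,n; in other words, SL_n(k) is the disjoint union over σ ∈ S_n of the double cosets B(k)·m_σ·B(k) (Bruhat decomposition). -/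
/-!
Bruhat decomposition for `SL_n` over a field `k`:
for every `g ∈ SL_n(k)` there exists a unique permutation `σ ∈ S_n` such that
`g ∈ B(k) · m · B(k)` for some monomial matrix `m ∈ SL_n(k)` of shape `σ`
(nonzero entries exactly at the positions `(σ j, j)`), where `B(k)` is the
subgroup of upper triangular matrices of `SL_n(k)`.
-/

/-- The set of upper triangular matrices in `SL_n(k)`. -/
def BorelSL (k : Type) [Field k] (n : ℕ) :
    Set (Matrix.SpecialLinearGroup (Fin n) k) :=
  {b | ∀ i j : Fin n, j < i → (b : Matrix (Fin n) (Fin n) k) i j = 0}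

/-- `m` is a monomial matrix of shape `σ`: its nonzero entries are exactly at the
positions `(σ j, j)`. -/
def IsMonomialOfShape (k : Type) [Field k] (n : ℕ)
    (σ : Equiv.Perm (Fin n)) (m : Matrix.SpecialLinearGroup (Fin n) k) : Prop :=
  ∀ i j : Fin n, (m : Matrix (Fin n) (Fin n) k) i j ≠ 0 ↔ i = σ j

theorem borel_iff {k : Type} [Field k] {n : ℕ} (b : Matrix.SpecialLinearGroup (Fin n) k) :
    b ∈ BorelSL k n ↔ (b : Matrix (Fin n) (Fin n) k).BlockTriangular id := by
  constructor
  · intro h i j hij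
    exact h i j hij
  · intro h i j hij
    exact h hij

theorem borel_mul {k : Type} [Field k] {n : ℕ} {a b : Matrix.SpecialLinearGroup (Fin n) k}
    (ha : a ∈ BorelSL k n) (hb : b ∈ BorelSL k n) : a * b ∈ BorelSL k n := by
  rw [borel_iff] at *
  rw [Matrix.SpecialLinearGroup.coe_mul]
  exact ha.mul hb

theorem borel_one {k : Type} [Field k] {n : ℕ} :
    (1 : Matrix.SpecialLinearGroup (Fin n) k) ∈ BorelSL k n := by
  rw [borel_iff, Matrix.SpecialLinearGroup.coe_one]
  exact Matrix.blockTriangular_one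

theorem borel_inv {k : Type} [Field k] {n : ℕ} {a : Matrix.SpecialLinearGroup (Fin n) k}
    (ha : a ∈ BorelSL k n) : a⁻¹ ∈ BorelSL k n := by
  rw [borel_iff] at *
  have h1 : ((a⁻¹ : Matrix.SpecialLinearGroup (Fin n) k) : Matrix (Fin n) (Fin n) k)
      = (a : Matrix (Fin n) (Fin n) k)⁻¹ := by
    symm
    apply Matrix.inv_eq_right_inv
    rw [← Matrix.SpecialLinearGroup.coe_mul, mul_inv_cancel, Matrix.SpecialLinearGroup.coe_one]
  rw [h1]
  haveI : Invertible (a : Matrix (Fin n) (Fin n) k) :=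
    Matrix.invertibleOfIsUnitDet _ (by rw [a.det_coe]; exact isUnit_one)
  exact Matrix.blockTriangular_inv_of_blockTriangular ha

theorem borel_diag {k : Type} [Field k] {n : ℕ} {a : Matrix.SpecialLinearGroup (Fin n) k}
    (ha : a ∈ BorelSL k n) (i : Fin n) : (a : Matrix (Fin n) (Fin n) k) i i ≠ 0 := by
  rw [borel_iff] at ha
  have h := Matrix.det_of_upperTriangular ha
  rw [a.det_coe] at h
  intro h0
  exact one_ne_zero (h.trans (Finset.prod_eq_zero (Finset.mem_univ i) h0))

theorem perm_eq_one {n : ℕ} (π : Equiv.Perm (Fin n)) (h : ∀ j, π j ≤ j) (j : Fin n) :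
    π j = j := by
  induction j using WellFoundedLT.induction with
  | ind j ih =>
    rcases (h j).lt_or_eq with hlt | heq
    · have := π.injective (ih _ hlt)
      exact absurd this hlt.ne
    · exact heq

theorem bruhat_unique {k : Type} [Field k] {n : ℕ} (σ τ : Equiv.Perm (Fin n))
    (m m' c d : Matrix.SpecialLinearGroup (Fin n) k)
    (hm : IsMonomialOfShape k n σ m) (hm' : IsMonomialOfShape k n τ m')
    (hc : c ∈ BorelSL k n) (hd : d ∈ BorelSL k n) (h : c * m = m' * d) : σ = τ := by
  have key : ∀ j, (τ⁻¹ * σ) j ≤ j := by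
    intro j
    by_contra hlt
    rw [not_le] at hlt
    have h1 := congrArg (fun x : Matrix.SpecialLinearGroup (Fin n) k =>
      (x : Matrix (Fin n) (Fin n) k) (σ j) j) h
    simp only [Matrix.SpecialLinearGroup.coe_mul, Matrix.mul_apply] at h1
    rw [Finset.sum_eq_single (σ j), Finset.sum_eq_zero] at h1
    · exact mul_ne_zero (borel_diag hc _) ((hm _ _).2 rfl) h1
    · intro l _
      by_cases hl : σ j = τ l
      · have : (τ⁻¹ * σ) j = l := by simp [hl]
        rw [this] at hlt
        rw [hd _ _ hlt, mul_zero]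
      · have := (not_congr (hm' (σ j) l)).2 hl
        rw [not_not.1 this, zero_mul]
    · intro l _ hl
      have := (not_congr (hm l j)).2 hl
      rw [not_not.1 this, mul_zero]
    · simp
  ext j
  have := perm_eq_one _ key j
  rw [Equiv.Perm.mul_apply, Equiv.Perm.inv_eq_iff_eq] at this
  rw [this]

/-- Column `c` is reduced. -/
def RedCol {k : Type} [Field k] {n : ℕ} (A : Matrix (Fin n) (Fin n) k) (c : Fin n) : Prop :=
  ∃ p, A p c ≠ 0 ∧ (∀ r, r ≠ p → A r c = 0) ∧ (∀ d, d ≠ c → A p d = 0)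

theorem bruhat_step {k : Type} [Field k] {n : ℕ} (A : Matrix.SpecialLinearGroup (Fin n) k)
    (j : Fin n) (hA : ∀ c, c < j → RedCol (A : Matrix (Fin n) (Fin n) k) c) :
    ∃ A' : Matrix.SpecialLinearGroup (Fin n) k, ∃ u ∈ BorelSL k n, ∃ v ∈ BorelSL k n,
      A = u * A' * v ∧ ∀ c, c ≤ j → RedCol (A' : Matrix (Fin n) (Fin n) k) c := by
  classical
  obtain ⟨i, hi, hmax⟩ : ∃ i, A.1 i j ≠ 0 ∧ ∀ r, i < r → A.1 r j = 0 := by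
    have hne : (Finset.univ.filter fun i => A.1 i j ≠ 0).Nonempty := by
      by_contra hcon
      rw [Finset.not_nonempty_iff_eq_empty, Finset.filter_eq_empty_iff] at hcon
      have := Matrix.det_eq_zero_of_column_eq_zero (A := A.1) j
        (fun i => not_not.1 (hcon (Finset.mem_univ i)))
      rw [A.2] at this
      exact one_ne_zero this
    refine ⟨Finset.max' _ hne, ?_, ?_⟩
    · exact (Finset.mem_filter.1 (Finset.max'_mem _ hne)).2
    · intro r hr
      by_contra h0
      have := Finset.le_max' (Finset.univ.filter fun i => A.1 i j ≠ 0) r (by simp [h0])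
      exact absurd hr (not_lt.2 this)
  have hrow : ∀ c, c < j → A.1 i c = 0 := by
    intro c hc
    obtain ⟨p, h1, h2, h3⟩ := hA c hc
    apply h2
    rintro rfl
    exact hi (h3 j hc.ne')
  let a := A.1 i j
  let u : Fin n → k := fun r => if r = i then 0 else A.1 r j / a
  let v : Fin n → k := fun c => if c = j then 0 else A.1 i c / a
  let U : Matrix (Fin n) (Fin n) k := 1 + Matrix.vecMulVec u (Pi.single i 1)
  let V : Matrix (Fin n) (Fin n) k := 1 + Matrix.vecMulVec (Pi.single j 1) v
  let A' : Matrix (Fin n) (Fin n) k := Matrix.of fun r c =>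
    if r = i then (if c = j then a else 0) else
      if c = j then 0 else A.1 r c - A.1 r j * A.1 i c / a
  have hUt : U.BlockTriangular id := by
    intro r c hrc
    have hrc' : c < r := hrc
    simp only [U, u, Matrix.add_apply, Matrix.one_apply_ne hrc'.ne', Matrix.vecMulVec_apply,
      Pi.single_apply]
    by_cases hc : c = i
    · subst hc
      simp [hmax r hrc']
    · simp [hc]
  have hVt : V.BlockTriangular id := by
    intro r c hrc
    have hrc' : c < r := hrc
    simp only [V, v, Matrix.add_apply, Matrix.one_apply_ne hrc'.ne', Matrix.vecMulVec_apply,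
      Pi.single_apply]
    by_cases hc : r = j
    · subst hc
      simp [hrow c hrc']
    · simp [hc]
  have hUd : U.det = 1 := by
    rw [Matrix.det_of_upperTriangular hUt]
    apply Finset.prod_eq_one
    intro r _
    by_cases hr : r = i <;> simp [U, u, Matrix.vecMulVec_apply, hr]
  have hVd : V.det = 1 := by
    rw [Matrix.det_of_upperTriangular hVt]
    apply Finset.prod_eq_one
    intro r _
    by_cases hr : r = j <;> simp [V, v, Matrix.vecMulVec_apply, hr]
  have hU : ∀ (M : Matrix (Fin n) (Fin n) k) r c, (U * M) r c = M r c + u r * M i c := by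
    intro M r c
    simp [U, add_mul, Matrix.vecMulVec_mul, Matrix.vecMulVec_apply]
  have hV : ∀ (M : Matrix (Fin n) (Fin n) k) r c, (M * V) r c = M r c + M r j * v c := by
    intro M r c
    simp [V, mul_add, Matrix.mul_vecMulVec, Matrix.vecMulVec_apply]
  have ha : a ≠ 0 := hi
  have hEq : A.1 = U * A' * V := by
    ext r c
    rw [hV, hU, hU]
    by_cases hr : r = i <;> by_cases hc : c = j
    · simp [A', u, v, hr, hc, a]
    · simp [A', u, v, hr, hc]
      field_simp
    · simp [A', u, v, hr, hc]
      field_simp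
    · simp [A', u, v, hr, hc]
      field_simp
      ring
  have hd' : A'.det = 1 := by
    have := congrArg Matrix.det hEq
    rw [A.2, Matrix.det_mul, Matrix.det_mul, hUd, hVd, one_mul, mul_one] at this
    exact this.symm
  refine ⟨⟨A', hd'⟩, ⟨U, hUd⟩, (borel_iff _).2 hUt, ⟨V, hVd⟩, (borel_iff _).2 hVt,
    Subtype.ext hEq, ?_⟩
  intro c hc
  change RedCol A' c
  rcases hc.lt_or_eq with hlt | rfl
  · obtain ⟨p, h1, h2, h3⟩ := hA c hlt
    have hpi : p ≠ i := by
      rintro rfl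
      exact hi (h3 j hlt.ne')
    have hpj := h3 j hlt.ne'
    refine ⟨p, ?_, ?_, ?_⟩
    · simpa [A', hpi, hlt.ne, hrow c hlt] using h1
    · intro r hr
      have := h2 r hr
      by_cases hri : r = i
      · simp [A', hri, hlt.ne]
      · simpa [A', hri, hlt.ne, hrow c hlt] using this
    · intro d hd
      have := h3 d hd
      by_cases hdj : d = j
      · simp [A', hdj, hpi]
      · simp only [A', Matrix.of_apply, if_neg hdj, if_neg hpi]
        rw [show A.1 p d = 0 from this, show A.1 p j = 0 from hpj]
        simp
  · refine ⟨i, ?_, ?_, ?_⟩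
    · simpa [A'] using ha
    · intro r hr
      simp [A', hr]
    · intro d hd
      simp [A', hd]

theorem bruhat_iter {k : Type} [Field k] {n : ℕ} (g : Matrix.SpecialLinearGroup (Fin n) k)
    (t : ℕ) (ht : t ≤ n) :
    ∃ A' : Matrix.SpecialLinearGroup (Fin n) k, ∃ u ∈ BorelSL k n, ∃ v ∈ BorelSL k n,
      g = u * A' * v ∧ ∀ c : Fin n, c.val < t → RedCol (A' : Matrix (Fin n) (Fin n) k) c := by
  induction t with
  | zero => exact ⟨g, 1, borel_one, 1, borel_one, by simp, fun c hc => absurd hc (by omega)⟩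
  | succ t ih =>
    obtain ⟨A, u, hu, v, hv, h, hA⟩ := ih (by omega)
    obtain ⟨A', u', hu', v', hv', h', hA'⟩ := bruhat_step A ⟨t, ht⟩ (fun c hc => hA c hc)
    refine ⟨A', u * u', borel_mul hu hu', v' * v, borel_mul hv' hv, ?_, ?_⟩
    · rw [h, h']
      simp only [mul_assoc]
    · intro c hc
      exact hA' c (Fin.le_def.2 (Nat.lt_succ_iff.1 hc))

theorem bruhat_decomposition (k : Type) [Field k] (n : ℕ) (hn : 2 ≤ n)
    (g : Matrix.SpecialLinearGroup (Fin n) k) :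
    ∃! σ : Equiv.Perm (Fin n),
      ∃ m : Matrix.SpecialLinearGroup (Fin n) k, IsMonomialOfShape k n σ m ∧
        ∃ b₁ ∈ BorelSL k n, ∃ b₂ ∈ BorelSL k n, g = b₁ * m * b₂ := by
  obtain ⟨m, u, hu, v, hv, hg, hm⟩ := bruhat_iter g n le_rfl
  choose p h1 h2 h3 using fun c : Fin n => hm c c.2
  have hinj : Function.Injective p := by
    intro c d hcd
    by_contra hne
    apply h1 c
    rw [hcd]
    exact h3 d c hne
  let σ : Equiv.Perm (Fin n) := Equiv.ofBijective p (Finite.injective_iff_bijective.1 hinj)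
  have hσ : IsMonomialOfShape k n σ m := by
    intro i j
    change _ ↔ i = p j
    constructor
    · intro h
      by_contra hne
      exact h (h2 j i hne)
    · rintro rfl
      exact h1 j
  refine ⟨σ, ⟨m, hσ, u, hu, v, hv, hg⟩, ?_⟩
  rintro τ ⟨m', hm', b₁, hb₁, b₂, hb₂, h⟩
  refine bruhat_unique τ σ m' m (u⁻¹ * b₁) (v * b₂⁻¹) hm' hσ (borel_mul (borel_inv hu) hb₁)
    (borel_mul hv (borel_inv hb₂)) ?_
  rw [hg] at h
  rw [← mul_assoc, eq_mul_inv_iff_mul_eq, mul_assoc, mul_assoc, inv_mul_eq_iff_eq_mul,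
    ← mul_assoc, ← mul_assoc, h]
end

section
/- Every nonzero f ∈ K can be written uniquely as f = t1^i·t2^j·u with i, j ∈ ℤ and u ∈ O_K^×; consequently the map (i,j) ↦ t1^i·t2^j·O_K^× is a group isomorphism from ℤ ⊕ ℤ onto K^×/O_K^×. -/
/-!
Every nonzero `f` in the two-dimensional local field `K = F_q((t1))((t2))` is
uniquely `f = t1^i · t2^j · u` with `i, j ∈ ℤ` and `u ∈ O_Kˣ`; consequently
`(i,j) ↦ t1^i · t2^j · O_Kˣ` is a group isomorphism `ℤ ⊕ ℤ ≃ K^× / O_Kˣ`.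
-/

set_option synthInstance.maxHeartbeats 1000000
set_option maxHeartbeats 1000000

noncomputable section

/-- The units of `K` form a commutative group (restated to help instance search
through the iterated Laurent series field structure). -/
noncomputable instance (F : Type) [Field F] : CommGroup (Ktwo F)ˣ :=
  inferInstanceAs (CommGroup (@Units (Ktwo F) (CommMonoid.toMonoid)))

/-- The unit group `O_Kˣ = {f ∈ K1[[t2]]ˣ : the constant coefficient of f in t2
lies in F_q[[t1]]ˣ}`, as a set of elements of `K`. -/
def OKunits (F : Type) [Field F] : Set (Ktwo F) :=
  {f | (∀ m : ℤ, m < 0 → f.coeff m = 0) ∧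
    (∀ m : ℤ, m < 0 → (f.coeff 0).coeff m = 0) ∧
    ((f.coeff 0).coeff 0) ≠ 0}

theorem mem_OKunits_iff_aux (F : Type) [Field F] (f : Ktwo F) (hf : f ≠ 0) :
    f ∈ OKunits F ↔ f.order = 0 ∧ f.leadingCoeff.order = 0 := by
  have hl : f.leadingCoeff ≠ 0 := HahnSeries.leadingCoeff_ne_zero.mpr hf
  constructor
  · rintro ⟨h1, h2, h3⟩
    have hc : f.coeff 0 ≠ 0 := by
      intro h; rw [h] at h3; simp at h3
    have ho : f.order = 0 := by
      apply le_antisymm (HahnSeries.order_le_of_coeff_ne_zero hc)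
      by_contra hlt
      exact HahnSeries.coeff_order_eq_zero.not.mpr hf (h1 _ (not_le.mp hlt))
    have hlc : f.leadingCoeff = f.coeff 0 := by
      rw [HahnSeries.leadingCoeff_eq, ho]
    refine ⟨ho, ?_⟩
    rw [hlc]
    apply le_antisymm (HahnSeries.order_le_of_coeff_ne_zero h3)
    by_contra hlt
    exact HahnSeries.coeff_order_eq_zero.not.mpr hc (h2 _ (not_le.mp hlt))
  · rintro ⟨ho, ho'⟩
    have hlc : f.leadingCoeff = f.coeff 0 := by
      rw [HahnSeries.leadingCoeff_eq, ho]
    rw [hlc] at ho' hl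
    refine ⟨fun m hm => HahnSeries.coeff_eq_zero_of_lt_order (by rw [ho]; exact hm),
      fun m hm => HahnSeries.coeff_eq_zero_of_lt_order (by rw [ho']; exact hm), ?_⟩
    have := HahnSeries.coeff_order_eq_zero.not.mpr hl
    rwa [ho'] at this

def valTwo (F : Type) [Field F] : (Ktwo F)ˣ →* Multiplicative (ℤ × ℤ) where
  toFun f := Multiplicative.ofAdd ((f : Ktwo F).leadingCoeff.order, (f : Ktwo F).order)
  map_one' := by
    have h1 : ((1 : (Ktwo F)ˣ) : Ktwo F) = 1 := rfl
    rw [h1, HahnSeries.leadingCoeff_one, HahnSeries.order_one, HahnSeries.order_one]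
    rfl
  map_mul' f g := by
    have h1 : ((f * g : (Ktwo F)ˣ) : Ktwo F) = (f : Ktwo F) * (g : Ktwo F) := rfl
    have hf : (f : Ktwo F) ≠ 0 := f.ne_zero
    have hg : (g : Ktwo F) ≠ 0 := g.ne_zero
    rw [h1, HahnSeries.leadingCoeff_mul, HahnSeries.order_mul hf hg,
      HahnSeries.order_mul (HahnSeries.leadingCoeff_ne_zero.mpr hf)
        (HahnSeries.leadingCoeff_ne_zero.mpr hg)]
    rfl

theorem mem_OKunits_iff_val (F : Type) [Field F] (f : (Ktwo F)ˣ) :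
    (f : Ktwo F) ∈ OKunits F ↔ valTwo F f = 1 := by
  rw [mem_OKunits_iff_aux F _ f.ne_zero]
  constructor
  · rintro ⟨h1, h2⟩
    change Multiplicative.ofAdd ((f : Ktwo F).leadingCoeff.order, (f : Ktwo F).order) = 1
    rw [h1, h2]; rfl
  · intro h
    have h' : ((f : Ktwo F).leadingCoeff.order, (f : Ktwo F).order) = ((0, 0) : ℤ × ℤ) := h
    exact ⟨congrArg Prod.snd h', congrArg Prod.fst h'⟩

theorem valTwo_params (F : Type) [Field F] (ht1 : tone F ≠ 0) (ht2 : ttwo F ≠ 0) (i j : ℤ) :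
    valTwo F (Units.mk0 (tone F) ht1 ^ i * Units.mk0 (ttwo F) ht2 ^ j) =
      Multiplicative.ofAdd (i, j) := by
  have e1 : valTwo F (Units.mk0 (tone F) ht1) = Multiplicative.ofAdd (1, 0) := by
    change Multiplicative.ofAdd ((tone F).leadingCoeff.order, (tone F).order) = _
    have h : (HahnSeries.single 1 1 : Kone F) ≠ 0 := HahnSeries.single_ne_zero one_ne_zero
    rw [tone, HahnSeries.leadingCoeff_of_single, HahnSeries.order_single h,
      HahnSeries.order_single one_ne_zero]
  have e2 : valTwo F (Units.mk0 (ttwo F) ht2) = Multiplicative.ofAdd (0, 1) := by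
    change Multiplicative.ofAdd ((ttwo F).leadingCoeff.order, (ttwo F).order) = _
    rw [ttwo, HahnSeries.leadingCoeff_of_single, HahnSeries.order_single one_ne_zero,
      HahnSeries.order_one]
  have m : ∀ a b : (Ktwo F)ˣ, valTwo F (a * b) = valTwo F a * valTwo F b := (valTwo F).map_mul
  have z : ∀ (a : (Ktwo F)ˣ) (n : ℤ), valTwo F (a ^ n) = valTwo F a ^ n := (valTwo F).map_zpow
  rw [m, z, z, e1, e2, ← ofAdd_zsmul, ← ofAdd_zsmul, ← ofAdd_add]
  simp

theorem local_parameters_decomposition (F : Type) [Field F] [Fintype F]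
    (ht1 : tone F ≠ 0) (ht2 : ttwo F ≠ 0) :
    (∀ f : Ktwo F, f ≠ 0 →
      ∃! p : (ℤ × ℤ) × Ktwo F, p.2 ∈ OKunits F ∧
        f = (tone F) ^ p.1.1 * (ttwo F) ^ p.1.2 * p.2) ∧
    (∃ U : Subgroup (Ktwo F)ˣ,
      ((U : Set (Ktwo F)ˣ) = {u : (Ktwo F)ˣ | (u : Ktwo F) ∈ OKunits F}) ∧
      ∃ e : Multiplicative (ℤ × ℤ) ≃* ((Ktwo F)ˣ ⧸ U),
        ∀ i j : ℤ, e (Multiplicative.ofAdd (i, j)) =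
          QuotientGroup.mk (Units.mk0 (tone F) ht1 ^ i * Units.mk0 (ttwo F) ht2 ^ j)) := by
  classical
  have z : ∀ (a : (Ktwo F)ˣ) (n : ℤ), ((a ^ n : (Ktwo F)ˣ) : Ktwo F) = (a : Ktwo F) ^ n :=
    fun a n => Units.val_zpow_eq_zpow_val a n
  have m : ∀ a b : (Ktwo F)ˣ, valTwo F (a * b) = valTwo F a * valTwo F b := (valTwo F).map_mul
  have hT : ∀ i j : ℤ, ((Units.mk0 (tone F) ht1 ^ i * Units.mk0 (ttwo F) ht2 ^ j : (Ktwo F)ˣ) :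
      Ktwo F) = tone F ^ i * ttwo F ^ j := by
    intro i j
    rw [Units.val_mul, z, z]; rfl
  refine ⟨?_, (valTwo F).ker, ?_, ?_⟩
  · intro f hf
    obtain ⟨g, rfl⟩ : ∃ g : (Ktwo F)ˣ, (g : Ktwo F) = f := ⟨Units.mk0 f hf, rfl⟩
    obtain ⟨i, j, hij⟩ : ∃ i j : ℤ, valTwo F g = Multiplicative.ofAdd (i, j) := ⟨_, _, rfl⟩
    set T := Units.mk0 (tone F) ht1 ^ i * Units.mk0 (ttwo F) ht2 ^ j with hTdef
    have hgT : g = T * (T⁻¹ * g) := (mul_inv_cancel_left T g).symm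
    refine ⟨((i, j), ((T⁻¹ * g : (Ktwo F)ˣ) : Ktwo F)), ⟨?_, ?_⟩, ?_⟩
    · change ((T⁻¹ * g : (Ktwo F)ˣ) : Ktwo F) ∈ OKunits F
      rw [mem_OKunits_iff_val]
      have h := congrArg (valTwo F) hgT
      rw [m, hij, hTdef, valTwo_params] at h
      exact left_eq_mul.mp h
    · change (g : Ktwo F) = tone F ^ i * ttwo F ^ j * ((T⁻¹ * g : (Ktwo F)ˣ) : Ktwo F)
      rw [← hT]
      exact congrArg Units.val hgT
    · rintro ⟨⟨i', j'⟩, u⟩ ⟨hu, hfu⟩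
      change u ∈ OKunits F at hu
      change (g : Ktwo F) = tone F ^ i' * ttwo F ^ j' * u at hfu
      have hu0 : u ≠ 0 := by
        rintro rfl
        rw [mul_zero] at hfu
        exact g.ne_zero hfu
      obtain ⟨w, rfl⟩ : ∃ w : (Ktwo F)ˣ, (w : Ktwo F) = u := ⟨Units.mk0 u hu0, rfl⟩
      rw [mem_OKunits_iff_val] at hu
      have hg : g = Units.mk0 (tone F) ht1 ^ i' * Units.mk0 (ttwo F) ht2 ^ j' * w := by
        apply Units.ext
        rw [Units.val_mul, hT]; exact hfu
      have h := congrArg (valTwo F) hg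
      rw [m, valTwo_params, hu, mul_one, hij] at h
      have h' : ((i, j) : ℤ × ℤ) = (i', j') := h
      obtain ⟨rfl, rfl⟩ := Prod.mk.inj h'
      have : w = T⁻¹ * g := eq_inv_mul_of_mul_eq hg.symm
      rw [this]
  · ext u
    exact (mem_OKunits_iff_val F u).symm
  · have hs : Function.Surjective (valTwo F) := fun x =>
      ⟨_, valTwo_params F ht1 ht2 x.toAdd.1 x.toAdd.2⟩
    refine ⟨(QuotientGroup.quotientKerEquivOfSurjective (valTwo F) hs).symm, fun i j => ?_⟩
    rw [MulEquiv.symm_apply_eq]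
    exact (valTwo_params F ht1 ht2 i j).symm
end
end
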